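/- Let u be a monotone traveling wave solution of the balanced Allen-Cahn equation in the plane. Then there exists λ₁ ∈ ℝ such that for every λ > λ₁ the reflected function u_λ(x,y) := u(2λ − x, y) satisfies u_λ(x,y) > u(x,y) for all (x,y) with x > λ and y ∈ ℝ. -/

import Mathlib

open Real Filter MeasureTheory Metric

noncomputable def pdx (u : ℝ → ℝ → ℝ) (x y : ℝ) : ℝ := deriv (fun t => u t y) x

noncomputable def pdy (u : ℝ → ℝ → ℝ) (x y : ℝ) : ℝ := deriv (fun t => u x t) y

noncomputable def pdxx (u : ℝ → ℝ → ℝ) (x y : ℝ) : ℝ := deriv (fun t => pdx u t y) x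

noncomputable def pdyy (u : ℝ → ℝ → ℝ) (x y : ℝ) : ℝ := deriv (fun t => pdy u x t) y

/-- `F` is a balanced double-well potential. -/
def BalancedDoubleWell (F : ℝ → ℝ) : Prop :=
  ContDiff ℝ 3 F ∧ deriv F (-1) = 0 ∧ deriv F 1 = 0 ∧
  0 < deriv (deriv F) (-1) ∧ 0 < deriv (deriv F) 1 ∧
  (∀ s ∈ Set.Ioo (-1 : ℝ) 0, 0 < deriv F s) ∧
  (∀ s ∈ Set.Ioo (0 : ℝ) 1, deriv F s < 0) ∧
  F (-1) = 0 ∧ F 1 = 0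

/-- `u` is a `C³` solution of `Δu + c uᵧ = F'(u)` on `ℝ²` with `|u| ≤ 1`
which is monotone in `y`. -/
def IsSolution (F : ℝ → ℝ) (c : ℝ) (u : ℝ → ℝ → ℝ) : Prop :=
  ContDiff ℝ 3 (fun p : ℝ × ℝ => u p.1 p.2) ∧
  (∀ x y : ℝ, pdxx u x y + pdyy u x y + c * pdy u x y = deriv F (u x y)) ∧
  (∀ x y : ℝ, |u x y| ≤ 1) ∧
  (∀ x y : ℝ, 0 < pdy u x y)

/-- A monotone traveling wave solution connecting `-1` to `1`. -/
def IsTravelingWave (F : ℝ → ℝ) (c : ℝ) (u : ℝ → ℝ → ℝ) : Prop :=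
  IsSolution F c u ∧
  (∀ x : ℝ, Tendsto (fun y => u x y) atTop (nhds 1)) ∧
  (∀ x : ℝ, Tendsto (fun y => u x y) atBot (nhds (-1)))

/-! ### Partial derivatives of functions of two variables -/

section Calculus

variable {f : ℝ → ℝ → ℝ}

theorem hasDerivAt_comp_curve (hf : ContDiff ℝ 1 (fun p : ℝ × ℝ => f p.1 p.2))
    {a b : ℝ → ℝ} {a' b' t : ℝ} (ha : HasDerivAt a a' t) (hb : HasDerivAt b b' t) :
    HasDerivAt (fun s => f (a s) (b s)) (a' * pdx f (a t) (b t) + b' * pdy f (a t) (b t)) t := by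
  have hd : HasFDerivAt (fun p : ℝ × ℝ => f p.1 p.2)
      (fderiv ℝ (fun p : ℝ × ℝ => f p.1 p.2) (a t, b t)) (a t, b t) :=
    ((hf.differentiable one_ne_zero) (a t, b t)).hasFDerivAt
  set A := fderiv ℝ (fun p : ℝ × ℝ => f p.1 p.2) (a t, b t) with hA
  have key : ∀ {p q : ℝ → ℝ} {p' q' s : ℝ}, p s = a t → q s = b t → HasDerivAt p p' s →
      HasDerivAt q q' s → HasDerivAt (fun r => f (p r) (q r)) (A (p', q')) s := by
    intro p q p' q' s h1 h2 hp hq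
    have h3 : HasDerivAt (fun r => (p r, q r)) (p', q') s := hp.prodMk hq
    have h4 : HasFDerivAt (fun p : ℝ × ℝ => f p.1 p.2) A (p s, q s) := by rw [h1, h2]; exact hd
    exact h4.comp_hasDerivAt s h3
  have hx : pdx f (a t) (b t) = A (1, 0) :=
    (key (p := fun r => r) (q := fun _ => b t) (s := a t) rfl rfl (hasDerivAt_id _)
      (hasDerivAt_const _ _)).deriv
  have hy : pdy f (a t) (b t) = A (0, 1) :=
    (key (p := fun _ => a t) (q := fun r => r) (s := b t) rfl rfl (hasDerivAt_const _ _)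
      (hasDerivAt_id _)).deriv
  have := key rfl rfl ha hb
  convert this using 1
  rw [hx, hy]
  have h5 : ((a', b') : ℝ × ℝ) = a' • (1, 0) + b' • (0, 1) := by simp
  rw [h5, map_add, map_smul, map_smul]; simp

theorem hasDerivAt_pdx (hf : ContDiff ℝ 1 (fun p : ℝ × ℝ => f p.1 p.2)) (x y : ℝ) :
    HasDerivAt (fun t => f t y) (pdx f x y) x := by
  simpa using hasDerivAt_comp_curve hf (hasDerivAt_id x) (hasDerivAt_const x y)

theorem hasDerivAt_pdy (hf : ContDiff ℝ 1 (fun p : ℝ × ℝ => f p.1 p.2)) (x y : ℝ) :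
    HasDerivAt (fun t => f x t) (pdy f x y) y := by
  simpa using hasDerivAt_comp_curve hf (hasDerivAt_const y x) (hasDerivAt_id y)

theorem pdx_eq_fderiv (hf : ContDiff ℝ 1 (fun p : ℝ × ℝ => f p.1 p.2)) (p : ℝ × ℝ) :
    pdx f p.1 p.2 = fderiv ℝ (fun p : ℝ × ℝ => f p.1 p.2) p (1, 0) := by
  have hd := ((hf.differentiable one_ne_zero) p).hasFDerivAt
  have h3 : HasDerivAt (fun r : ℝ => (r, p.2)) ((1 : ℝ), (0 : ℝ)) p.1 :=
    (hasDerivAt_id _).prodMk (hasDerivAt_const _ _)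
  exact (hd.comp_hasDerivAt p.1 h3).deriv

theorem pdy_eq_fderiv (hf : ContDiff ℝ 1 (fun p : ℝ × ℝ => f p.1 p.2)) (p : ℝ × ℝ) :
    pdy f p.1 p.2 = fderiv ℝ (fun p : ℝ × ℝ => f p.1 p.2) p (0, 1) := by
  have hd := ((hf.differentiable one_ne_zero) p).hasFDerivAt
  have h3 : HasDerivAt (fun r : ℝ => (p.1, r)) ((0 : ℝ), (1 : ℝ)) p.2 :=
    (hasDerivAt_const _ _).prodMk (hasDerivAt_id _)
  exact (hd.comp_hasDerivAt p.2 h3).deriv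

theorem contDiff_pdx {n : ℕ} (hf : ContDiff ℝ (n + 1) (fun p : ℝ × ℝ => f p.1 p.2)) :
    ContDiff ℝ n (fun p : ℝ × ℝ => pdx f p.1 p.2) := by
  have h1 : ContDiff ℝ 1 (fun p : ℝ × ℝ => f p.1 p.2) := hf.of_le (by norm_cast; omega)
  simp_rw [pdx_eq_fderiv h1]
  exact (hf.fderiv_right le_rfl).clm_apply contDiff_const

theorem contDiff_pdy {n : ℕ} (hf : ContDiff ℝ (n + 1) (fun p : ℝ × ℝ => f p.1 p.2)) :
    ContDiff ℝ n (fun p : ℝ × ℝ => pdy f p.1 p.2) := by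
  have h1 : ContDiff ℝ 1 (fun p : ℝ × ℝ => f p.1 p.2) := hf.of_le (by norm_cast; omega)
  simp_rw [pdy_eq_fderiv h1]
  exact (hf.fderiv_right le_rfl).clm_apply contDiff_const

theorem pdx_pdy_comm (hf : ContDiff ℝ 2 (fun p : ℝ × ℝ => f p.1 p.2)) (x y : ℝ) :
    pdx (pdy f) x y = pdy (pdx f) x y := by
  have h1 : ContDiff ℝ 1 (fun p : ℝ × ℝ => f p.1 p.2) := hf.of_le (by norm_num)
  have hx : ContDiff ℝ 1 (fun p : ℝ × ℝ => pdx f p.1 p.2) := contDiff_pdx (n := 1) hf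
  have hy : ContDiff ℝ 1 (fun p : ℝ × ℝ => pdy f p.1 p.2) := contDiff_pdy (n := 1) hf
  have e1 := pdx_eq_fderiv hy (x, y)
  have e2 := pdy_eq_fderiv hx (x, y)
  simp only at e1 e2
  rw [e1, e2]
  have ex : (fun p : ℝ × ℝ => pdx f p.1 p.2) =
      fun p => fderiv ℝ (fun p : ℝ × ℝ => f p.1 p.2) p (1, 0) := funext (pdx_eq_fderiv h1)
  have ey : (fun p : ℝ × ℝ => pdy f p.1 p.2) =
      fun p => fderiv ℝ (fun p : ℝ × ℝ => f p.1 p.2) p (0, 1) := funext (pdy_eq_fderiv h1)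
  have hd : DifferentiableAt ℝ (fderiv ℝ (fun p : ℝ × ℝ => f p.1 p.2)) (x, y) :=
    ((hf.fderiv_right (m := 1) (by norm_num)).differentiable one_ne_zero) _
  rw [ex, ey, fderiv_clm_apply hd (differentiableAt_const _),
    fderiv_clm_apply hd (differentiableAt_const _)]
  have hs : IsSymmSndFDerivAt ℝ (fun p : ℝ × ℝ => f p.1 p.2) (x, y) :=
    hf.contDiffAt.isSymmSndFDerivAt (by simp)
  simpa using hs (1, 0) (0, 1)

end Calculus

/-! ### Second order jets along lines and the maximum principle -/

/-- `g` is differentiable near `x`, with first and second derivatives `a` and `b` at `x`. -/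
def Jet (g : ℝ → ℝ) (x a b : ℝ) : Prop :=
  ∃ d : ℝ → ℝ, (∀ᶠ t in nhds x, HasDerivAt g (d t) t) ∧ d x = a ∧ HasDerivAt d b x

namespace Jet

variable {g h : ℝ → ℝ} {x a b a' b' : ℝ}

theorem of_hasDerivAt {d : ℝ → ℝ} (h1 : ∀ t, HasDerivAt g (d t) t) (h2 : HasDerivAt d b x) :
    Jet g x (d x) b := ⟨d, Eventually.of_forall h1, rfl, h2⟩

theorem add (hg : Jet g x a b) (hh : Jet h x a' b') :
    Jet (fun t => g t + h t) x (a + a') (b + b') := by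
  obtain ⟨d, h1, rfl, h2⟩ := hg
  obtain ⟨e, k1, rfl, k2⟩ := hh
  exact ⟨fun t => d t + e t, by filter_upwards [h1, k1] with t p q using p.add q, rfl, h2.add k2⟩

theorem const_mul (r : ℝ) (hg : Jet g x a b) : Jet (fun t => r * g t) x (r * a) (r * b) := by
  obtain ⟨d, h1, rfl, h2⟩ := hg
  exact ⟨fun t => r * d t, by filter_upwards [h1] with t p using p.const_mul r, rfl,
    h2.const_mul r⟩

theorem sub (hg : Jet g x a b) (hh : Jet h x a' b') :
    Jet (fun t => g t - h t) x (a - a') (b - b') := by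
  obtain ⟨d, h1, rfl, h2⟩ := hg
  obtain ⟨e, k1, rfl, k2⟩ := hh
  exact ⟨fun t => d t - e t, by filter_upwards [h1, k1] with t p q using p.sub q, rfl, h2.sub k2⟩

theorem const (r : ℝ) : Jet (fun _ => r) x 0 0 :=
  of_hasDerivAt (d := fun _ => 0) (fun _ => hasDerivAt_const _ _) (hasDerivAt_const _ _)

theorem comp_add (s : ℝ) (hg : Jet g (x + s) a b) : Jet (fun t => g (t + s)) x a b := by
  obtain ⟨d, h1, rfl, h2⟩ := hg
  have hc : Tendsto (fun t => t + s) (nhds x) (nhds (x + s)) :=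
    (continuous_id.add continuous_const).tendsto x
  refine ⟨fun t => d (t + s), ?_, rfl, h2.comp_add_const x s⟩
  filter_upwards [hc.eventually h1] with t p using p.comp_add_const t s

theorem comp_const_sub (s : ℝ) (hg : Jet g (s - x) a b) :
    Jet (fun t => g (s - t)) x (-a) b := by
  obtain ⟨d, h1, rfl, h2⟩ := hg
  have hc : Tendsto (fun t => s - t) (nhds x) (nhds (s - x)) :=
    (continuous_const.sub continuous_id).tendsto x
  refine ⟨fun t => -d (s - t), ?_, rfl, ?_⟩
  · filter_upwards [hc.eventually h1] with t p using p.comp_const_sub s t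
  · have := (h2.comp_const_sub s x).fun_neg
    rwa [neg_neg] at this

theorem fst_eq_zero (hg : Jet g x a b) (hm : IsLocalMin g x) : a = 0 := by
  obtain ⟨d, h1, rfl, -⟩ := hg
  exact hm.hasDerivAt_eq_zero h1.self_of_nhds

theorem snd_nonneg (hg : Jet g x a b) (hm : IsLocalMin g x) : 0 ≤ b := by
  by_contra hb
  push Not at hb
  have ha := hg.fst_eq_zero hm
  obtain ⟨d, h1, rfl, h2⟩ := hg
  have hd : deriv g =ᶠ[nhds x] d := h1.mono fun t ht => ht.deriv
  have hdd : deriv (deriv g) x = b := by rw [hd.deriv_eq]; exact h2.deriv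
  have hM : IsLocalMax g x := isLocalMax_of_deriv_deriv_neg (by rw [hdd]; exact hb)
    (by rw [hd.self_of_nhds, ha]) h1.self_of_nhds.continuousAt
  have hc : g =ᶠ[nhds x] fun _ => g x := by
    filter_upwards [hm, hM] with t p q using le_antisymm q p
  have : deriv (deriv g) x = 0 := by
    rw [hc.deriv.deriv_eq]; simp
  linarith

end Jet

/-- `f` has second order jets at `(x, y)` along both coordinate lines, and
`f_xx + f_yy + c f_y = l` there. -/
def HasL (c : ℝ) (f : ℝ → ℝ → ℝ) (x y l : ℝ) : Prop :=
  ∃ a b a' b', Jet (fun t => f t y) x a b ∧ Jet (fun t => f x t) y a' b' ∧ b + b' + c * a' = l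

namespace HasL

variable {c : ℝ} {f g : ℝ → ℝ → ℝ} {x y l m : ℝ}

theorem add (hf : HasL c f x y l) (hg : HasL c g x y m) :
    HasL c (fun x y => f x y + g x y) x y (l + m) := by
  obtain ⟨a, b, a', b', h1, h2, rfl⟩ := hf
  obtain ⟨d, e, d', e', k1, k2, rfl⟩ := hg
  exact ⟨_, _, _, _, h1.add k1, h2.add k2, by ring⟩

theorem sub (hf : HasL c f x y l) (hg : HasL c g x y m) :
    HasL c (fun x y => f x y - g x y) x y (l - m) := by
  obtain ⟨a, b, a', b', h1, h2, rfl⟩ := hf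
  obtain ⟨d, e, d', e', k1, k2, rfl⟩ := hg
  exact ⟨_, _, _, _, h1.sub k1, h2.sub k2, by ring⟩

theorem const_mul (r : ℝ) (hf : HasL c f x y l) :
    HasL c (fun x y => r * f x y) x y (r * l) := by
  obtain ⟨a, b, a', b', h1, h2, rfl⟩ := hf
  exact ⟨_, _, _, _, h1.const_mul r, h2.const_mul r, by ring⟩

theorem translate (s t : ℝ) (hf : HasL c f (x + s) (y + t) l) :
    HasL c (fun x y => f (x + s) (y + t)) x y l := by
  obtain ⟨a, b, a', b', h1, h2, rfl⟩ := hf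
  exact ⟨_, _, _, _, h1.comp_add s, h2.comp_add t, rfl⟩

theorem reflect (s t : ℝ) (hf : HasL c f (s - x) (y + t) l) :
    HasL c (fun x y => f (s - x) (y + t)) x y l := by
  obtain ⟨a, b, a', b', h1, h2, rfl⟩ := hf
  exact ⟨_, _, _, _, h1.comp_const_sub s, h2.comp_add t, rfl⟩

theorem nonneg (hf : HasL c f x y l) (hm : IsLocalMin (fun p : ℝ × ℝ => f p.1 p.2) (x, y)) :
    0 ≤ l := by
  obtain ⟨a, b, a', b', h1, h2, rfl⟩ := hf
  have m1 : IsLocalMin (fun t => f t y) x :=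
    hm.comp_tendsto (g := fun t => (t, y))
      ((Continuous.prodMk_left y).tendsto x)
  have m2 : IsLocalMin (fun t => f x t) y :=
    hm.comp_tendsto (g := fun t => (x, t))
      ((Continuous.prodMk_right x).tendsto y)
  have := h1.snd_nonneg m1
  have := h2.snd_nonneg m2
  have := h2.fst_eq_zero m2
  subst this
  linarith

end HasL

theorem hasL_of_contDiff {c : ℝ} {f : ℝ → ℝ → ℝ}
    (hf : ContDiff ℝ 2 (fun p : ℝ × ℝ => f p.1 p.2)) (x y : ℝ) :
    HasL c f x y (pdxx f x y + pdyy f x y + c * pdy f x y) := by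
  have h1 : ContDiff ℝ 1 (fun p : ℝ × ℝ => f p.1 p.2) := hf.of_le (by norm_num)
  have hx : ContDiff ℝ 1 (fun p : ℝ × ℝ => pdx f p.1 p.2) := contDiff_pdx (n := 1) hf
  have hy : ContDiff ℝ 1 (fun p : ℝ × ℝ => pdy f p.1 p.2) := contDiff_pdy (n := 1) hf
  exact ⟨_, _, _, _, Jet.of_hasDerivAt (fun t => hasDerivAt_pdx h1 t y) (hasDerivAt_pdx hx x y),
    Jet.of_hasDerivAt (fun t => hasDerivAt_pdy h1 x t) (hasDerivAt_pdy hy x y), rfl⟩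

/-- Minimum principle on a compact set. -/
theorem nonneg_on_compact {c : ℝ} {D : Set (ℝ × ℝ)} {f : ℝ → ℝ → ℝ} (hD : IsCompact D)
    (hf : ContinuousOn (fun p : ℝ × ℝ => f p.1 p.2) D)
    (h : ∀ x y, (x, y) ∈ D → f x y < 0 → D ∈ nhds (x, y) ∧ ∃ l < 0, HasL c f x y l) :
    ∀ x y, (x, y) ∈ D → 0 ≤ f x y := by
  intro x y hxy
  obtain ⟨⟨a, b⟩, hq, hmin⟩ := hD.exists_isMinOn ⟨_, hxy⟩ hf
  by_contra hneg
  push Not at hneg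
  have hle : f a b ≤ f x y := hmin hxy
  obtain ⟨hn, l, hl, hL⟩ := h a b hq (lt_of_le_of_lt hle hneg)
  have := hL.nonneg (hmin.isLocalMin hn)
  linarith

theorem jet_sqrt_one_add_sq (x : ℝ) :
    ∃ a b, Jet (fun t => √(1 + t ^ 2)) x a b ∧ |a| ≤ 1 ∧ b ≤ 1 := by
  have hpos : ∀ t : ℝ, 0 < 1 + t ^ 2 := fun t => by positivity
  have hs : ∀ t : ℝ, 0 < √(1 + t ^ 2) := fun t => Real.sqrt_pos.2 (hpos t)
  have h1 : ∀ t : ℝ, HasDerivAt (fun t => √(1 + t ^ 2)) (t / √(1 + t ^ 2)) t := by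
    intro t
    have h0 : HasDerivAt (fun t : ℝ => 1 + t ^ 2) (2 * t) t := by
      simpa using (hasDerivAt_pow 2 t).const_add 1
    convert h0.sqrt (hpos t).ne' using 1
    field_simp
  have h2 : HasDerivAt (fun t => t / √(1 + t ^ 2))
      ((1 * √(1 + x ^ 2) - x * (x / √(1 + x ^ 2))) / (√(1 + x ^ 2)) ^ 2) x :=
    (hasDerivAt_id x).div (h1 x) (hs x).ne'
  refine ⟨_, _, Jet.of_hasDerivAt h1 h2, ?_, ?_⟩
  · rw [abs_div, abs_of_pos (hs x), div_le_one (hs x)]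
    exact Real.abs_le_sqrt (by linarith)
  · have e : √(1 + x ^ 2) ^ 2 = 1 + x ^ 2 := Real.sq_sqrt (hpos x).le
    have one_le : 1 ≤ √(1 + x ^ 2) := Real.one_le_sqrt.2 (by nlinarith)
    have : 1 * √(1 + x ^ 2) - x * (x / √(1 + x ^ 2)) = 1 / √(1 + x ^ 2) := by
      field_simp
      linarith
    rw [this, div_div]
    exact (div_le_one (by positivity)).2 (by nlinarith [one_le_pow₀ one_le (n := 2)])

/-- Minimum principle on a closed, possibly unbounded set for functions bounded from below. -/
theorem nonneg_on_closed {c μ m : ℝ} {D : Set (ℝ × ℝ)} {f : ℝ → ℝ → ℝ} (hD : IsClosed D)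
    (hf : ContinuousOn (fun p : ℝ × ℝ => f p.1 p.2) D)
    (hb : ∀ x y, (x, y) ∈ D → m ≤ f x y) (hμ : 0 < μ)
    (h : ∀ x y, (x, y) ∈ D → f x y < 0 → D ∈ nhds (x, y) ∧ ∃ l ≤ μ * f x y, HasL c f x y l) :
    ∀ x y, (x, y) ∈ D → 0 ≤ f x y := by
  intro x y hxy
  by_contra hneg
  push Not at hneg
  let φ : ℝ → ℝ → ℝ := fun x y => √(1 + x ^ 2) + √(1 + y ^ 2)
  have hφc : Continuous (fun p : ℝ × ℝ => φ p.1 p.2) := by fun_prop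
  have hφ0 : ∀ x y, 0 ≤ φ x y := fun x y => by positivity
  have hφn : ∀ p : ℝ × ℝ, ‖p‖ ≤ φ p.1 p.2 := by
    intro p
    have h1 : |p.1| ≤ √(1 + p.1 ^ 2) := Real.abs_le_sqrt (by linarith)
    have h2 : |p.2| ≤ √(1 + p.2 ^ 2) := Real.abs_le_sqrt (by linarith)
    have h3 : 0 ≤ √(1 + p.1 ^ 2) := by positivity
    have h4 : 0 ≤ √(1 + p.2 ^ 2) := by positivity
    rw [Prod.norm_def, Real.norm_eq_abs, Real.norm_eq_abs]
    exact max_le (by simp only [φ]; linarith) (by simp only [φ]; linarith)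
  set f0 := f x y with hf0
  obtain ⟨ε, hε, hε1, hε2⟩ : ∃ ε > 0, ε * φ x y < -f0 / 2 ∧ ε * (2 + |c|) < μ * (-f0 / 2) := by
    have ha : Tendsto (fun ε => ε * φ x y) (nhdsWithin 0 (Set.Ioi 0)) (nhds 0) := by
      have : Tendsto (fun ε : ℝ => ε * φ x y) (nhds 0) (nhds (0 * φ x y)) :=
        (continuous_id.mul continuous_const).tendsto 0
      rw [zero_mul] at this
      exact this.mono_left nhdsWithin_le_nhds
    have hb : Tendsto (fun ε => ε * (2 + |c|)) (nhdsWithin 0 (Set.Ioi 0)) (nhds 0) := by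
      have : Tendsto (fun ε : ℝ => ε * (2 + |c|)) (nhds 0) (nhds (0 * (2 + |c|))) :=
        (continuous_id.mul continuous_const).tendsto 0
      rw [zero_mul] at this
      exact this.mono_left nhdsWithin_le_nhds
    have e1 := ha.eventually (gt_mem_nhds (show 0 < -f0 / 2 by linarith))
    have e2 := hb.eventually (gt_mem_nhds (show 0 < μ * (-f0 / 2) by
      apply mul_pos hμ; linarith))
    obtain ⟨ε, h1, h2, h3⟩ := (e1.and (e2.and self_mem_nhdsWithin)).exists
    exact ⟨ε, h3, h1, h2⟩
  have hex : ∃ p ∈ D, IsMinOn (fun p : ℝ × ℝ => f p.1 p.2 + ε * φ p.1 p.2) D p := by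
    refine (hf.add (hφc.continuousOn.const_smul ε)).exists_isMinOn' hD hxy ?_
    have ht : Tendsto (fun p : ℝ × ℝ => ‖p‖) (cocompact (ℝ × ℝ)) atTop :=
      tendsto_norm_cocompact_atTop
    have := ht.eventually (eventually_ge_atTop ((f0 + ε * φ x y - m) / ε))
    rw [eventually_inf_principal]
    filter_upwards [this] with p hp hpD
    have h1 := hb p.1 p.2 hpD
    rw [div_le_iff₀ hε] at hp
    have h2 := mul_le_mul_of_nonneg_left (hφn p) hε.le
    change f0 + ε * φ x y ≤ f p.1 p.2 + ε * φ p.1 p.2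
    linarith
  obtain ⟨⟨a, b⟩, hq, hmin⟩ := hex
  have hle : f a b + ε * φ a b ≤ f x y + ε * φ x y := hmin hxy
  have hφab := mul_nonneg hε.le (hφ0 a b)
  have hfab : f a b < f0 / 2 := by rw [← hf0] at hle; linarith
  obtain ⟨hn, l, hl, hL⟩ := h a b hq (by linarith)
  obtain ⟨a1, b1, j1, ha1, hb1⟩ := jet_sqrt_one_add_sq a
  obtain ⟨a2, b2, j2, ha2, hb2⟩ := jet_sqrt_one_add_sq b
  have hLφ : HasL c φ a b (b1 + b2 + c * a2) :=
    ⟨a1, b1, a2, b2, by simpa [φ] using j1.add (Jet.const (√(1 + b ^ 2))),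
      by simpa [φ] using (Jet.const (√(1 + a ^ 2))).add j2, rfl⟩
  have h0 := (hL.add (hLφ.const_mul ε)).nonneg (hmin.isLocalMin hn)
  have h1 : c * a2 ≤ |c| := by
    calc c * a2 ≤ |c * a2| := le_abs_self _
      _ = |c| * |a2| := abs_mul _ _
      _ ≤ |c| * 1 := by gcongr
      _ = |c| := mul_one _
  have h2 : ε * (b1 + b2 + c * a2) ≤ ε * (2 + |c|) := by gcongr; linarith
  have h3 : μ * f a b ≤ μ * (f0 / 2) := by gcongr
  nlinarith

/-! ### Interior gradient estimate -/

theorem pdx_le_of_bounds {c M N : ℝ} {f : ℝ → ℝ → ℝ}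
    (hf : ContDiff ℝ 2 (fun p : ℝ × ℝ => f p.1 p.2)) (x₀ y₀ : ℝ)
    (hM : ∀ x y, |x - x₀| ≤ 1 → |y - y₀| ≤ 1 → |f x y| ≤ M)
    (hN : ∀ x y, |x - x₀| ≤ 1 → |y - y₀| ≤ 1 →
      |pdxx f x y + pdyy f x y + c * pdy f x y| ≤ N) :
    pdx f x₀ y₀ ≤ 2 * M + (N + 2 * |c| * M) / 2 := by
  have hM0 : 0 ≤ M := (abs_nonneg _).trans (hM x₀ y₀ (by simp) (by simp))
  refine le_of_forall_pos_le_add fun ε hε => ?_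
  set K := N + 2 * |c| * M + 2 * ε with hK
  have hN0 : 0 ≤ N := (abs_nonneg _).trans (hN x₀ y₀ (by simp) (by simp))
  have hK0 : 0 ≤ K := by positivity
  let φ : ℝ → ℝ → ℝ := fun x y => (1 / 2) * (f (x + x₀) (y + y₀) - f (x₀ - x) (y + y₀))
  let ψ : ℝ → ℝ → ℝ := fun x y => M * (y ^ 2 + 2 * x - x ^ 2) + K * (x * (1 - x) / 2)
  have hfc : Continuous (fun p : ℝ × ℝ => f p.1 p.2) := hf.continuous
  have hφc : Continuous (fun p : ℝ × ℝ => φ p.1 p.2) := by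
    have h1 : Continuous (fun p : ℝ × ℝ => f (p.1 + x₀) (p.2 + y₀)) :=
      hfc.comp (g := fun p : ℝ × ℝ => f p.1 p.2)
        (f := fun p : ℝ × ℝ => (p.1 + x₀, p.2 + y₀)) (by fun_prop)
    have h2 : Continuous (fun p : ℝ × ℝ => f (x₀ - p.1) (p.2 + y₀)) :=
      hfc.comp (g := fun p : ℝ × ℝ => f p.1 p.2)
        (f := fun p : ℝ × ℝ => (x₀ - p.1, p.2 + y₀)) (by fun_prop)
    exact continuous_const.mul (h1.sub h2)
  have hψc : Continuous (fun p : ℝ × ℝ => ψ p.1 p.2) := by fun_prop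
  have hφM : ∀ x y, |x| ≤ 1 → |y| ≤ 1 → φ x y ≤ M := by
    intro x y hx hy
    have h1 := abs_le.1 (hM (x + x₀) (y + y₀) (by simpa using hx) (by simpa using hy))
    have h2 := abs_le.1 (hM (x₀ - x) (y + y₀) (by simpa using hx) (by simpa using hy))
    simp only [φ]; linarith
  have hnn : ∀ x y, (x, y) ∈ Set.Icc (0 : ℝ) 1 ×ˢ Set.Icc (-1 : ℝ) 1 → 0 ≤ ψ x y - φ x y := by
    refine nonneg_on_compact (c := c) (f := fun x y => ψ x y - φ x y)
      (isCompact_Icc.prod isCompact_Icc) (hψc.sub hφc).continuousOn ?_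
    rintro x y ⟨⟨hx0, hx1⟩, hy0, hy1⟩ hneg
    simp only at hx0 hx1 hy0 hy1
    have hxa : |x| ≤ 1 := abs_le.2 ⟨by linarith, hx1⟩
    have hya : |y| ≤ 1 := abs_le.2 ⟨hy0, hy1⟩
    have hφle := hφM x y hxa hya
    have hpx : 0 ≤ K * (x * (1 - x) / 2) :=
      mul_nonneg hK0 (div_nonneg (mul_nonneg hx0 (by linarith)) (by norm_num))
    have hx0' : 0 < x := by
      rcases hx0.lt_or_eq with h | h
      · exact h
      · subst h
        have : φ 0 y = 0 := by simp [φ]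
        have h2 : ψ 0 y = M * y ^ 2 := by simp [ψ]
        rw [this, h2] at hneg
        nlinarith [mul_nonneg hM0 (sq_nonneg y)]
    have hbig : M ≤ M * (y ^ 2 + 2 * x - x ^ 2) → False := fun h => by
      simp only [ψ] at hneg
      linarith
    have hx1' : x < 1 := by
      rcases hx1.lt_or_eq with h | h
      · exact h
      · subst h
        exact (hbig (by nlinarith [mul_nonneg hM0 (sq_nonneg y)])).elim
    have hyne : y ^ 2 ≠ 1 := by
      intro h
      apply hbig
      rw [h]
      nlinarith [mul_nonneg hM0 (mul_nonneg hx0 (show 0 ≤ 2 - x by linarith))]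
    have hy0' : -1 < y := lt_of_le_of_ne hy0 (by rintro rfl; norm_num at hyne)
    have hy1' : y < 1 := lt_of_le_of_ne hy1 (by rintro rfl; norm_num at hyne)
    refine ⟨prod_mem_nhds (Icc_mem_nhds hx0' hx1') (Icc_mem_nhds hy0' hy1'), ?_⟩
    have hL1 := (hasL_of_contDiff (c := c) hf (x + x₀) (y + y₀)).translate x₀ y₀
    have hL2 := (hasL_of_contDiff (c := c) hf (x₀ - x) (y + y₀)).reflect x₀ y₀
    have n1 := abs_le.1 (hN (x + x₀) (y + y₀) (by simpa using hxa) (by simpa using hya))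
    have n2 := abs_le.1 (hN (x₀ - x) (y + y₀) (by simpa using hxa) (by simpa using hya))
    have hLφ := (hL1.sub hL2).const_mul (1 / 2)
    have hψx : Jet (fun t => ψ t y) x (M * (2 - 2 * x) + K * ((1 - 2 * x) / 2))
        (M * (-2) + K * (-1)) := by
      refine Jet.of_hasDerivAt (d := fun x => M * (2 - 2 * x) + K * ((1 - 2 * x) / 2)) ?_ ?_
      · intro t
        have h1 : HasDerivAt (fun t : ℝ => y ^ 2 + 2 * t - t ^ 2) (2 - 2 * t) t := by
          exact (((((hasDerivAt_id t).const_mul 2).const_add (y ^ 2)).sub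
            (hasDerivAt_pow 2 t))).congr_deriv (by simp)
        have h2 : HasDerivAt (fun t : ℝ => t * (1 - t) / 2) ((1 - 2 * t) / 2) t := by
          exact (((hasDerivAt_id t).mul ((hasDerivAt_id t).const_sub 1)).div_const 2).congr_deriv
            (by simp only [id]; ring)
        exact (h1.const_mul M).add (h2.const_mul K)
      · have h1 : HasDerivAt (fun t : ℝ => 2 - 2 * t) (-2) x := by
          simpa using ((hasDerivAt_id x).const_mul 2).const_sub 2
        have h2 : HasDerivAt (fun t : ℝ => (1 - 2 * t) / 2) (-1) x := by
          exact ((((hasDerivAt_id x).const_mul 2).const_sub 1).div_const 2).congr_deriv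
            (by norm_num)
        exact (h1.const_mul M).add (h2.const_mul K)
    have hψy : Jet (fun t => ψ x t) y (M * (2 * y)) (M * 2) := by
      refine Jet.of_hasDerivAt (d := fun y => M * (2 * y)) ?_ ?_
      · intro t
        have h1 : HasDerivAt (fun t : ℝ => t ^ 2 + 2 * x - x ^ 2) (2 * t) t := by
          simpa using ((hasDerivAt_pow 2 t).add_const (2 * x)).sub_const (x ^ 2)
        exact (h1.const_mul M).add_const _
      · simpa using ((hasDerivAt_id y).const_mul 2).const_mul M
    have hLψ : HasL c ψ x y _ := ⟨_, _, _, _, hψx, hψy, rfl⟩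
    refine ⟨_, ?_, hLψ.sub hLφ⟩
    have h1 : c * y ≤ |c| := by
      calc c * y ≤ |c * y| := le_abs_self _
        _ = |c| * |y| := abs_mul _ _
        _ ≤ |c| * 1 := by gcongr
        _ = |c| := mul_one _
    have h2 := mul_le_mul_of_nonneg_left h1 hM0
    nlinarith
  have hd : HasDerivAt (fun x => ψ x 0 - φ x 0) (2 * M + K / 2 - pdx f x₀ y₀) 0 := by
    have h1f : ContDiff ℝ 1 (fun p : ℝ × ℝ => f p.1 p.2) := hf.of_le (by norm_num)
    have e1 : HasDerivAt (fun x => f (x + x₀) (0 + y₀)) (pdx f x₀ y₀) 0 := by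
      have := (hasDerivAt_pdx h1f (0 + x₀) y₀).comp_add_const 0 x₀
      simpa using this
    have e2 : HasDerivAt (fun x => f (x₀ - x) (0 + y₀)) (-pdx f x₀ y₀) 0 := by
      have := (hasDerivAt_pdx h1f (x₀ - 0) y₀).comp_const_sub x₀ 0
      simpa using this
    have e3 : HasDerivAt (fun x : ℝ => ψ x 0) (2 * M + K / 2) 0 := by
      have h1 : HasDerivAt (fun t : ℝ => (0 : ℝ) ^ 2 + 2 * t - t ^ 2) 2 0 := by
        exact ((((hasDerivAt_id (0 : ℝ)).const_mul 2).const_add ((0 : ℝ) ^ 2)).sub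
          (hasDerivAt_pow 2 (0 : ℝ))).congr_deriv (by simp)
      have h2 : HasDerivAt (fun t : ℝ => t * (1 - t) / 2) (1 / 2) 0 := by
        exact (((hasDerivAt_id (0 : ℝ)).mul
          ((hasDerivAt_id (0 : ℝ)).const_sub 1)).div_const 2).congr_deriv (by simp)
      exact ((h1.const_mul M).add (h2.const_mul K)).congr_deriv (by ring)
    exact (e3.sub ((e1.sub e2).const_mul (1 / 2))).congr_deriv (by ring)
  have hslope := hd.tendsto_slope_zero_right
  have h0 : ψ 0 0 - φ 0 0 = 0 := by simp [ψ, φ]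
  have : 0 ≤ 2 * M + K / 2 - pdx f x₀ y₀ := by
    refine ge_of_tendsto hslope ?_
    have : Set.Ioc (0 : ℝ) 1 ∈ nhdsWithin 0 (Set.Ioi 0) := Ioc_mem_nhdsGT one_pos
    filter_upwards [this] with t ht
    have := hnn t 0 ⟨⟨ht.1.le, ht.2⟩, by norm_num, by norm_num⟩
    rw [zero_add, h0, sub_zero]
    exact smul_nonneg (inv_nonneg.2 ht.1.le) this
  linarith

theorem abs_pdx_le_of_bounds {c M N : ℝ} {f : ℝ → ℝ → ℝ}
    (hf : ContDiff ℝ 2 (fun p : ℝ × ℝ => f p.1 p.2)) (x₀ y₀ : ℝ)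
    (hM : ∀ x y, |x - x₀| ≤ 1 → |y - y₀| ≤ 1 → |f x y| ≤ M)
    (hN : ∀ x y, |x - x₀| ≤ 1 → |y - y₀| ≤ 1 →
      |pdxx f x y + pdyy f x y + c * pdy f x y| ≤ N) :
    |pdx f x₀ y₀| ≤ 2 * M + (N + 2 * |c| * M) / 2 := by
  refine abs_le'.2 ⟨pdx_le_of_bounds hf x₀ y₀ hM hN, ?_⟩
  have ex : pdx (fun x y => -f x y) = fun x y => -pdx f x y := by
    funext x y; simp [pdx, deriv.fun_neg]
  have ey : pdy (fun x y => -f x y) = fun x y => -pdy f x y := by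
    funext x y; simp [pdy, deriv.fun_neg]
  have exx : pdxx (fun x y => -f x y) = fun x y => -pdxx f x y := by
    funext x y; simp [pdxx, ex, deriv.fun_neg]
  have eyy : pdyy (fun x y => -f x y) = fun x y => -pdyy f x y := by
    funext x y; simp [pdyy, ey, deriv.fun_neg]
  have := pdx_le_of_bounds (c := c) (M := M) (N := N) (f := fun x y => -f x y) hf.neg x₀ y₀
    (fun x y hx hy => by rw [abs_neg]; exact hM x y hx hy)
    (fun x y hx hy => by
      rw [exx, eyy, ey, ← abs_neg]
      convert hN x y hx hy using 2
      ring)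
  rwa [ex] at this

/-! ### One variable estimates -/

theorem abs_sub_le_of_hasDerivAt {f f' : ℝ → ℝ} {a b C : ℝ}
    (h : ∀ t, HasDerivAt f (f' t) t) (hC : ∀ t ∈ Set.uIcc a b, |f' t| ≤ C) :
    |f b - f a| ≤ C * |b - a| :=
  (convex_uIcc a b).norm_image_sub_le_of_norm_hasDerivWithin_le
    (fun t _ => (h t).hasDerivWithinAt) hC Set.left_mem_uIcc Set.right_mem_uIcc

/-- A nonnegative function with bounded second derivative controls the square of its slope. -/
theorem sq_deriv_le_of_nonneg {g d e : ℝ → ℝ} {C : ℝ} (hC : 0 < C) (h1 : ∀ t, HasDerivAt g (d t) t)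
    (h2 : ∀ t, HasDerivAt d (e t) t) (hg : ∀ t, 0 ≤ g t) (he : ∀ t, |e t| ≤ C) (x : ℝ) :
    d x ^ 2 ≤ 4 * C * g x := by
  set s := x - d x / (2 * C) with hs
  have hr : ∀ t, HasDerivAt (fun t => g t - d x * t) (d t - d x) t := fun t =>
    ((h1 t).sub ((hasDerivAt_id t).const_mul (d x))).congr_deriv (by simp)
  have hb : ∀ t ∈ Set.uIcc x s, |d t - d x| ≤ C * |s - x| := by
    intro t ht
    have h3 := abs_sub_le_of_hasDerivAt (a := x) (b := t) h2 (fun r _ => he r)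
    exact h3.trans (mul_le_mul_of_nonneg_left (Set.abs_sub_left_of_mem_uIcc ht) hC.le)
  have h4 := (abs_le.1 (abs_sub_le_of_hasDerivAt hr hb)).2
  have h5 : C * |s - x| * |s - x| = d x ^ 2 / (4 * C) := by
    rw [mul_assoc, ← sq, sq_abs, hs]; field_simp; ring
  have h6 := hg s
  have h7 : d x * s - d x * x = -(d x ^ 2 / (2 * C)) := by rw [hs]; field_simp; ring
  rw [h5] at h4
  have h8 : d x ^ 2 / (2 * C) - d x ^ 2 / (4 * C) ≤ g x := by linarith
  have h9 : d x ^ 2 / (2 * C) - d x ^ 2 / (4 * C) = d x ^ 2 / (4 * C) := by field_simp; ring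
  rw [h9, div_le_iff₀ (by positivity)] at h8
  linarith

/-! ### Basic properties of travelling waves -/

/-- A monotone travelling wave with positive speed for a balanced double-well potential. -/
structure Wave (F : ℝ → ℝ) (c : ℝ) (u : ℝ → ℝ → ℝ) : Prop where
  well : BalancedDoubleWell F
  speed : 0 < c
  wave : IsTravelingWave F c u

namespace Wave

variable {F : ℝ → ℝ} {c : ℝ} {u : ℝ → ℝ → ℝ}

theorem smooth (w : Wave F c u) : ContDiff ℝ 3 (fun p : ℝ × ℝ => u p.1 p.2) := w.wave.1.1

theorem smooth_one (w : Wave F c u) : ContDiff ℝ 1 (fun p : ℝ × ℝ => u p.1 p.2) :=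
  w.smooth.of_le (by norm_num)

theorem smooth_two (w : Wave F c u) : ContDiff ℝ 2 (fun p : ℝ × ℝ => u p.1 p.2) :=
  w.smooth.of_le (by norm_num)

theorem continuous (w : Wave F c u) : Continuous (fun p : ℝ × ℝ => u p.1 p.2) :=
  w.smooth.continuous

theorem smooth_pdx (w : Wave F c u) : ContDiff ℝ 2 (fun p : ℝ × ℝ => pdx u p.1 p.2) :=
  contDiff_pdx (n := 2) w.smooth

theorem smooth_pdy (w : Wave F c u) : ContDiff ℝ 2 (fun p : ℝ × ℝ => pdy u p.1 p.2) :=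
  contDiff_pdy (n := 2) w.smooth

theorem smooth_pdx_one (w : Wave F c u) : ContDiff ℝ 1 (fun p : ℝ × ℝ => pdx u p.1 p.2) :=
  w.smooth_pdx.of_le (by norm_num)

theorem smooth_pdy_one (w : Wave F c u) : ContDiff ℝ 1 (fun p : ℝ × ℝ => pdy u p.1 p.2) :=
  w.smooth_pdy.of_le (by norm_num)

theorem pde (w : Wave F c u) (x y : ℝ) :
    pdxx u x y + pdyy u x y + c * pdy u x y = deriv F (u x y) := w.wave.1.2.1 x y

theorem pdy_pos (w : Wave F c u) (x y : ℝ) : 0 < pdy u x y := w.wave.1.2.2.2 x y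

theorem tendsto_atTop (w : Wave F c u) (x : ℝ) : Tendsto (fun y => u x y) atTop (nhds 1) :=
  w.wave.2.1 x

theorem tendsto_atBot (w : Wave F c u) (x : ℝ) : Tendsto (fun y => u x y) atBot (nhds (-1)) :=
  w.wave.2.2 x

theorem hasDerivAt_x (w : Wave F c u) (x y : ℝ) : HasDerivAt (fun t => u t y) (pdx u x y) x :=
  hasDerivAt_pdx w.smooth_one x y

theorem hasDerivAt_y (w : Wave F c u) (x y : ℝ) : HasDerivAt (fun t => u x t) (pdy u x y) y :=
  hasDerivAt_pdy w.smooth_one x y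

theorem hasDerivAt_xx (w : Wave F c u) (x y : ℝ) :
    HasDerivAt (fun t => pdx u t y) (pdxx u x y) x := hasDerivAt_pdx w.smooth_pdx_one x y

theorem hasDerivAt_xy (w : Wave F c u) (x y : ℝ) :
    HasDerivAt (fun t => pdx u x t) (pdy (pdx u) x y) y := hasDerivAt_pdy w.smooth_pdx_one x y

theorem hasDerivAt_yx (w : Wave F c u) (x y : ℝ) :
    HasDerivAt (fun t => pdy u t y) (pdy (pdx u) x y) x := by
  rw [← pdx_pdy_comm w.smooth_two]
  exact hasDerivAt_pdx w.smooth_pdy_one x y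

theorem hasDerivAt_yy (w : Wave F c u) (x y : ℝ) :
    HasDerivAt (fun t => pdy u x t) (pdyy u x y) y := hasDerivAt_pdy w.smooth_pdy_one x y

theorem strictMono (w : Wave F c u) (x : ℝ) : StrictMono (fun y => u x y) :=
  strictMono_of_hasDerivAt_pos (fun y => w.hasDerivAt_y x y) (fun y => w.pdy_pos x y)

theorem lt_one (w : Wave F c u) (x y : ℝ) : u x y < 1 :=
  lt_of_lt_of_le (w.strictMono x (lt_add_one y))
    ((w.strictMono x).monotone.ge_of_tendsto (w.tendsto_atTop x) (y + 1))

theorem neg_one_lt (w : Wave F c u) (x y : ℝ) : -1 < u x y :=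
  lt_of_le_of_lt ((w.strictMono x).monotone.le_of_tendsto (w.tendsto_atBot x) (y - 1))
    (w.strictMono x (sub_one_lt y))

theorem mem_Icc (w : Wave F c u) (x y : ℝ) : u x y ∈ Set.Icc (-1 : ℝ) 1 :=
  ⟨(w.neg_one_lt x y).le, (w.lt_one x y).le⟩

theorem contDiff_deriv (w : Wave F c u) : ContDiff ℝ 2 (deriv F) :=
  ((contDiff_succ_iff_deriv (n := 2)).1 w.well.1).2.2

theorem hasDerivAt_F (w : Wave F c u) (s : ℝ) : HasDerivAt F (deriv F s) s :=
  ((w.well.1.differentiable (by norm_num)) s).hasDerivAt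

theorem hasDerivAt_F' (w : Wave F c u) (s : ℝ) : HasDerivAt (deriv F) (deriv (deriv F) s) s :=
  ((w.contDiff_deriv.differentiable (by norm_num)) s).hasDerivAt

theorem continuous_F (w : Wave F c u) : Continuous F := w.well.1.continuous

theorem continuous_F' (w : Wave F c u) : Continuous (deriv F) := w.contDiff_deriv.continuous

theorem continuous_F'' (w : Wave F c u) : Continuous (deriv (deriv F)) :=
  ((contDiff_succ_iff_deriv (n := 1)).1 w.contDiff_deriv).2.2.continuous

theorem F_pos (w : Wave F c u) {s : ℝ} (h1 : -1 < s) (h2 : s < 1) : 0 < F s := by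
  obtain ⟨-, -, -, -, -, hp, hn, hm1, hp1⟩ := w.well
  rcases le_total s 0 with h | h
  · have : StrictMonoOn F (Set.Icc (-1) 0) :=
      strictMonoOn_of_deriv_pos (convex_Icc _ _) w.continuous_F.continuousOn
        (by rw [interior_Icc]; exact hp)
    have := this (by norm_num) ⟨h1.le, h⟩ h1
    linarith
  · have : StrictAntiOn F (Set.Icc 0 1) :=
      strictAntiOn_of_deriv_neg (convex_Icc _ _) w.continuous_F.continuousOn
        (by rw [interior_Icc]; exact hn)
    have := this ⟨h, h2.le⟩ (by norm_num) h2
    linarith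

theorem F_nonneg (w : Wave F c u) {s : ℝ} (h : s ∈ Set.Icc (-1 : ℝ) 1) : 0 ≤ F s := by
  rcases h.1.eq_or_lt with h1 | h1
  · rw [← h1, w.well.2.2.2.2.2.2.2.1]
  rcases h.2.eq_or_lt with h2 | h2
  · rw [h2, w.well.2.2.2.2.2.2.2.2]
  exact (w.F_pos h1 h2).le

/-- The `x`-derivative of a wave solves the linearized equation. -/
theorem linearized_pdx (w : Wave F c u) (x y : ℝ) :
    pdxx (pdx u) x y + pdyy (pdx u) x y + c * pdy (pdx u) x y =
      deriv (deriv F) (u x y) * pdx u x y := by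
  have hxx : ContDiff ℝ 1 (fun p : ℝ × ℝ => pdxx u p.1 p.2) := contDiff_pdx (n := 1) w.smooth_pdx
  have hyy : ContDiff ℝ 1 (fun p : ℝ × ℝ => pdyy u p.1 p.2) := contDiff_pdy (n := 1) w.smooth_pdy
  have h1 : HasDerivAt (fun t => pdxx u t y + pdyy u t y + c * pdy u t y)
      (pdx (pdxx u) x y + pdx (pdyy u) x y + c * pdy (pdx u) x y) x :=
    ((hasDerivAt_pdx hxx x y).add (hasDerivAt_pdx hyy x y)).add ((w.hasDerivAt_yx x y).const_mul c)
  have h2 : HasDerivAt (fun t => pdxx u t y + pdyy u t y + c * pdy u t y)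
      (deriv (deriv F) (u x y) * pdx u x y) x := by
    simp_rw [w.pde]
    exact (w.hasDerivAt_F' (u x y)).comp x (w.hasDerivAt_x x y)
  have e : pdyy (pdx u) x y = pdx (pdyy u) x y := by
    have h3 : pdy (pdx u) = pdx (pdy u) := by
      funext a b; exact (pdx_pdy_comm w.smooth_two a b).symm
    change pdy (pdy (pdx u)) x y = pdx (pdy (pdy u)) x y
    rw [h3, pdx_pdy_comm w.smooth_pdy]
  rw [← h1.unique h2, e]
  rfl

/-- The `y`-derivative of a wave solves the linearized equation. -/
theorem linearized_pdy (w : Wave F c u) (x y : ℝ) :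
    pdxx (pdy u) x y + pdyy (pdy u) x y + c * pdy (pdy u) x y =
      deriv (deriv F) (u x y) * pdy u x y := by
  have hxx : ContDiff ℝ 1 (fun p : ℝ × ℝ => pdxx u p.1 p.2) := contDiff_pdx (n := 1) w.smooth_pdx
  have hyy : ContDiff ℝ 1 (fun p : ℝ × ℝ => pdyy u p.1 p.2) := contDiff_pdy (n := 1) w.smooth_pdy
  have h1 : HasDerivAt (fun t => pdxx u x t + pdyy u x t + c * pdy u x t)
      (pdy (pdxx u) x y + pdy (pdyy u) x y + c * pdyy u x y) y :=
    ((hasDerivAt_pdy hxx x y).add (hasDerivAt_pdy hyy x y)).add ((w.hasDerivAt_yy x y).const_mul c)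
  have h2 : HasDerivAt (fun t => pdxx u x t + pdyy u x t + c * pdy u x t)
      (deriv (deriv F) (u x y) * pdy u x y) y := by
    simp_rw [w.pde]
    exact (w.hasDerivAt_F' (u x y)).comp y (w.hasDerivAt_y x y)
  have e : pdxx (pdy u) x y = pdy (pdxx u) x y := by
    have h3 : pdx (pdy u) = pdy (pdx u) := by
      funext a b; exact pdx_pdy_comm w.smooth_two a b
    change pdx (pdx (pdy u)) x y = pdy (pdx (pdx u)) x y
    rw [h3, pdx_pdy_comm w.smooth_pdx]
  rw [← h1.unique h2, e]
  rfl

theorem pdx_mirror (w : Wave F c u) (x y : ℝ) :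
    pdx (fun x y => u (-x) y) x y = -pdx u (-x) y := by
  have := (w.hasDerivAt_x (-x) y).scomp x (hasDerivAt_neg x)
  exact this.deriv.trans (by simp)

/-- The mirror image of a wave is a wave. -/
theorem mirror (w : Wave F c u) : Wave F c (fun x y => u (-x) y) := by
  have ex : pdx (fun x y => u (-x) y) = fun x y => -pdx u (-x) y := by
    funext x y
    exact w.pdx_mirror x y
  have exx : pdxx (fun x y => u (-x) y) = fun x y => pdxx u (-x) y := by
    funext x y
    have := ((w.hasDerivAt_xx (-x) y).scomp x (hasDerivAt_neg x)).fun_neg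
    unfold pdxx
    rw [ex]
    simpa [pdxx] using this.deriv
  refine ⟨w.well, w.speed, ⟨?_, ?_, ?_, ?_⟩, ?_, ?_⟩
  · exact w.smooth.comp (g := fun p : ℝ × ℝ => u p.1 p.2)
      (f := fun p : ℝ × ℝ => (-p.1, p.2)) (contDiff_fst.neg.prodMk contDiff_snd)
  · intro x y
    rw [exx]
    exact w.pde (-x) y
  · exact fun x y => w.wave.1.2.2.1 (-x) y
  · exact fun x y => w.pdy_pos (-x) y
  · exact fun x => w.tendsto_atTop (-x)
  · exact fun x => w.tendsto_atBot (-x)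

/-- A common bound for a wave, its derivatives and the nonlinearity. -/
structure Bound (F : ℝ → ℝ) (u : ℝ → ℝ → ℝ) (C : ℝ) : Prop where
  pos : 0 < C
  well : ∀ s ∈ Set.Icc (-1 : ℝ) 1, F s ≤ C
  well' : ∀ s ∈ Set.Icc (-1 : ℝ) 1, |deriv F s| ≤ C
  well'' : ∀ s ∈ Set.Icc (-1 : ℝ) 1, |deriv (deriv F) s| ≤ C
  dx : ∀ x y, |pdx u x y| ≤ C
  dy : ∀ x y, pdy u x y ≤ C
  dxx : ∀ x y, |pdxx u x y| ≤ C
  dyy : ∀ x y, |pdyy u x y| ≤ C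
  dxy : ∀ x y m, (∀ x' y', |x' - x| ≤ 1 → |y' - y| ≤ 1 → pdy u x' y' ≤ m) →
    |pdy (pdx u) x y| ≤ C * m

theorem exists_bound (w : Wave F c u) : ∃ C, Bound F u C := by
  obtain ⟨K0, hK0⟩ := (isCompact_Icc (a := (-1 : ℝ)) (b := 1)).exists_bound_of_continuousOn
    w.continuous_F.continuousOn
  obtain ⟨K1, hK1⟩ := (isCompact_Icc (a := (-1 : ℝ)) (b := 1)).exists_bound_of_continuousOn
    w.continuous_F'.continuousOn
  obtain ⟨K2, hK2⟩ := (isCompact_Icc (a := (-1 : ℝ)) (b := 1)).exists_bound_of_continuousOn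
    w.continuous_F''.continuousOn
  simp only [Real.norm_eq_abs] at hK0 hK1 hK2
  have hK0' : 0 ≤ K0 := (abs_nonneg _).trans (hK0 0 (by norm_num))
  have hK1' : 0 ≤ K1 := (abs_nonneg _).trans (hK1 0 (by norm_num))
  have hK2' : 0 ≤ K2 := (abs_nonneg _).trans (hK2 0 (by norm_num))
  have hc := w.speed
  set C1 := 2 * 1 + (K1 + 2 * |c| * 1) / 2 with hC1
  have hC1' : 0 ≤ C1 := by positivity
  have b1 : ∀ x y, |pdx u x y| ≤ C1 := fun x y =>
    abs_pdx_le_of_bounds w.smooth_two x y (fun a b _ _ => w.wave.1.2.2.1 a b)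
      (fun a b _ _ => by rw [w.pde]; exact hK1 _ (w.mem_Icc a b))
  set C2 := 2 * C1 + (K2 * C1 + 2 * |c| * C1) / 2 with hC2
  have hC2' : 0 ≤ C2 := by positivity
  have b2 : ∀ x y, |pdxx u x y| ≤ C2 := fun x y =>
    abs_pdx_le_of_bounds w.smooth_pdx x y (fun a b _ _ => b1 a b)
      (fun a b _ _ => by
        rw [w.linearized_pdx, abs_mul]
        exact mul_le_mul (hK2 _ (w.mem_Icc a b)) (b1 a b) (abs_nonneg _) hK2')
  set C3 := 2 + 2 * c + (K1 + C2) with hC3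
  have hC3' : 0 ≤ C3 := by positivity
  have b3 : ∀ x y, pdy u x y ≤ C3 := by
    intro x y
    obtain ⟨ξ, hξ, hs⟩ := exists_hasDerivAt_eq_slope (fun t => u x t) (fun t => pdy u x t)
      (lt_add_one y) (w.continuous.comp (by fun_prop : Continuous fun t => (x, t))).continuousOn
      (fun t _ => w.hasDerivAt_y x t)
    have hs2 : pdy u x ξ ≤ 2 := by
      rw [hs]
      have h1 := w.lt_one x (y + 1)
      have h2 := w.neg_one_lt x y
      norm_num
      linarith
    have hh := abs_sub_le_of_hasDerivAt (f := fun t => pdy u x t + c * u x t)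
      (f' := fun t => pdyy u x t + c * pdy u x t) (a := y) (b := ξ) (C := K1 + C2)
      (fun t => (w.hasDerivAt_yy x t).add ((w.hasDerivAt_y x t).const_mul c))
      (fun t _ => by
        have h1 := w.pde x t
        have h2 := abs_le.1 (b2 x t)
        have h3 := abs_le.1 (hK1 _ (w.mem_Icc x t))
        exact abs_le.2 ⟨by linarith, by linarith⟩)
    have h4 : |ξ - y| ≤ 1 := abs_le.2 ⟨by linarith [hξ.1], by linarith [hξ.2]⟩
    have h5 := (abs_le.1 hh).1
    have h6 : (K1 + C2) * |ξ - y| ≤ (K1 + C2) * 1 := by gcongr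
    have h7 := w.lt_one x ξ
    have h8 := w.neg_one_lt x y
    nlinarith
  set C4 := 2 + (K2 + 2 * |c|) / 2 with hC4
  have hC4' : 0 ≤ C4 := by positivity
  have b4 : ∀ x y m, (∀ x' y', |x' - x| ≤ 1 → |y' - y| ≤ 1 → pdy u x' y' ≤ m) →
      |pdy (pdx u) x y| ≤ C4 * m := by
    intro x y m hm
    have := abs_pdx_le_of_bounds (c := c) (M := m) (N := K2 * m) w.smooth_pdy x y
      (fun a b ha hb => by rw [abs_of_pos (w.pdy_pos a b)]; exact hm a b ha hb)
      (fun a b ha hb => by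
        rw [w.linearized_pdy, abs_mul, abs_of_pos (w.pdy_pos a b)]
        exact mul_le_mul (hK2 _ (w.mem_Icc a b)) (hm a b ha hb) (w.pdy_pos a b).le hK2')
    rw [← pdx_pdy_comm w.smooth_two]
    refine this.trans (le_of_eq ?_)
    rw [hC4]; ring
  have b5 : ∀ x y, |pdyy u x y| ≤ K1 + C2 + c * C3 := by
    intro x y
    have h1 := w.pde x y
    have h2 := abs_le.1 (b2 x y)
    have h3 := abs_le.1 (hK1 _ (w.mem_Icc x y))
    have h4 := w.pdy_pos x y
    have h5 := mul_pos hc h4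
    have h6 : c * pdy u x y ≤ c * C3 := mul_le_mul_of_nonneg_left (b3 x y) hc.le
    exact abs_le.2 ⟨by linarith, by linarith⟩
  have hcC := mul_nonneg hc.le hC3'
  refine ⟨1 + K0 + K1 + K2 + C1 + C2 + C3 + C4 + c * C3, by positivity, fun s hs => ?_,
    fun s hs => ?_, fun s hs => ?_, fun x y => ?_, fun x y => ?_, fun x y => ?_, fun x y => ?_,
    fun x y m hm => ?_⟩
  · linarith [(abs_le.1 (hK0 s hs)).2]
  · linarith [hK1 s hs]
  · linarith [hK2 s hs]
  · linarith [b1 x y]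
  · linarith [b3 x y]
  · linarith [b2 x y]
  · linarith [b5 x y]
  · refine (b4 x y m hm).trans ?_
    have hm0 : 0 ≤ m := (w.pdy_pos x y).le.trans (hm x y (by simp) (by simp))
    gcongr
    linarith

namespace Bound

variable {C : ℝ}

theorem abs_dxy (b : Bound F u C) (x y : ℝ) : |pdy (pdx u) x y| ≤ C * C :=
  b.dxy x y C fun _ _ _ _ => b.dy _ _

theorem sq_dx_le (b : Bound F u C) (w : Wave F c u) (x y : ℝ) :
    pdx u x y ^ 2 ≤ 4 * C * (1 - u x y) := by
  have := sq_deriv_le_of_nonneg (g := fun t => 1 - u t y) (d := fun t => -pdx u t y)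
    (e := fun t => -pdxx u t y) b.pos (fun t => (w.hasDerivAt_x t y).const_sub 1)
    (fun t => (w.hasDerivAt_xx t y).fun_neg) (fun t => by linarith [w.lt_one t y])
    (fun t => by rw [abs_neg]; exact b.dxx t y) x
  simpa using this

theorem sq_dx_le' (b : Bound F u C) (w : Wave F c u) (x y : ℝ) :
    pdx u x y ^ 2 ≤ 4 * C * (1 + u x y) :=
  sq_deriv_le_of_nonneg (g := fun t => 1 + u t y) (d := fun t => pdx u t y)
    (e := fun t => pdxx u t y) b.pos (fun t => (w.hasDerivAt_x t y).const_add 1)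
    (fun t => w.hasDerivAt_xx t y) (fun t => by linarith [w.neg_one_lt t y])
    (fun t => b.dxx t y) x

theorem sq_dy_le (b : Bound F u C) (w : Wave F c u) (x y : ℝ) :
    pdy u x y ^ 2 ≤ 4 * C * (1 - u x y) := by
  have := sq_deriv_le_of_nonneg (g := fun t => 1 - u x t) (d := fun t => -pdy u x t)
    (e := fun t => -pdyy u x t) b.pos (fun t => (w.hasDerivAt_y x t).const_sub 1)
    (fun t => (w.hasDerivAt_yy x t).fun_neg) (fun t => by linarith [w.lt_one x t])
    (fun t => by rw [abs_neg]; exact b.dyy x t) y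
  simpa using this

theorem sq_dy_le' (b : Bound F u C) (w : Wave F c u) (x y : ℝ) :
    pdy u x y ^ 2 ≤ 4 * C * (1 + u x y) :=
  sq_deriv_le_of_nonneg (g := fun t => 1 + u x t) (d := fun t => pdy u x t)
    (e := fun t => pdyy u x t) b.pos (fun t => (w.hasDerivAt_y x t).const_add 1)
    (fun t => w.hasDerivAt_yy x t) (fun t => by linarith [w.neg_one_lt x t])
    (fun t => b.dyy x t) y

end Bound

end Wave

/-! ### Divergence identities -/

theorem integral_divergence {f g fx gy : ℝ → ℝ → ℝ}
    (hf : ContDiff ℝ 1 (fun p : ℝ × ℝ => f p.1 p.2))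
    (hg : ContDiff ℝ 1 (fun p : ℝ × ℝ => g p.1 p.2))
    (hfx : ∀ x y, HasDerivAt (fun t => f t y) (fx x y) x)
    (hgy : ∀ x y, HasDerivAt (fun t => g x t) (gy x y) y) (a b p q : ℝ) :
    ∫ x in a..b, ∫ y in p..q, (fx x y + gy x y) =
      ((∫ x in a..b, g x q) - ∫ x in a..b, g x p) +
        ((∫ y in p..q, f b y) - ∫ y in p..q, f a y) := by
  have e1 : ∀ x y, fx x y = fderiv ℝ (fun p : ℝ × ℝ => f p.1 p.2) (x, y) (1, 0) := fun x y =>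
    (hfx x y).deriv.symm.trans (pdx_eq_fderiv hf (x, y))
  have e2 : ∀ x y, gy x y = fderiv ℝ (fun p : ℝ × ℝ => g p.1 p.2) (x, y) (0, 1) := fun x y =>
    (hgy x y).deriv.symm.trans (pdy_eq_fderiv hg (x, y))
  simp_rw [e1, e2]
  have hc1 : Continuous (fun p : ℝ × ℝ => fderiv ℝ (fun p : ℝ × ℝ => f p.1 p.2) p (1, 0)) :=
    (hf.continuous_fderiv one_ne_zero).clm_apply continuous_const
  have hc2 : Continuous (fun p : ℝ × ℝ => fderiv ℝ (fun p : ℝ × ℝ => g p.1 p.2) p (0, 1)) :=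
    (hg.continuous_fderiv one_ne_zero).clm_apply continuous_const
  rw [integral2_divergence_prod_of_hasFDerivAt (fun p : ℝ × ℝ => f p.1 p.2)
    (fun p : ℝ × ℝ => g p.1 p.2) _ _ a p b q hf.continuous.continuousOn hg.continuous.continuousOn
    (fun x _ => ((hf.differentiable one_ne_zero) x).hasFDerivAt)
    (fun x _ => ((hg.differentiable one_ne_zero) x).hasFDerivAt)
    ((hc1.add hc2).continuousOn.integrableOn_compact (isCompact_uIcc.prod isCompact_uIcc))]
  ring

theorem continuous_slice_x {f : ℝ → ℝ → ℝ} (hf : Continuous (fun p : ℝ × ℝ => f p.1 p.2)) (y : ℝ) :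
    Continuous (fun x => f x y) :=
  hf.comp (by fun_prop : Continuous fun t : ℝ => (t, y))

theorem continuous_slice_y {f : ℝ → ℝ → ℝ} (hf : Continuous (fun p : ℝ × ℝ => f p.1 p.2)) (x : ℝ) :
    Continuous (fun y => f x y) :=
  hf.comp (by fun_prop : Continuous fun t : ℝ => (x, t))

/-- `(x, y)` lies outside the open square of half-width `R`. -/
def Far (R x y : ℝ) : Prop := R ≤ |x| ∨ R ≤ |y|

theorem Far.mono {R R' x y : ℝ} (h : Far R x y) (hR : R' ≤ R) : Far R' x y :=
  h.imp hR.trans hR.trans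

theorem Far.of_near {R r x y x' y' : ℝ} (h : Far (R + r) x y) (hx : |x' - x| ≤ r)
    (hy : |y' - y| ≤ r) : Far R x' y' := by
  refine h.imp (fun h => ?_) (fun h => ?_)
  · have := abs_sub_abs_le_abs_sub x x'
    rw [abs_sub_comm] at this
    linarith
  · have := abs_sub_abs_le_abs_sub y y'
    rw [abs_sub_comm] at this
    linarith

/-- The energy density associated with translations in `y`. -/
noncomputable def energy (F : ℝ → ℝ) (u : ℝ → ℝ → ℝ) (x y : ℝ) : ℝ :=
  (pdx u x y ^ 2 - pdy u x y ^ 2) / 2 + F (u x y)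

namespace Wave

variable {F : ℝ → ℝ} {c : ℝ} {u : ℝ → ℝ → ℝ} {C : ℝ}

theorem contDiff_energy (w : Wave F c u) :
    ContDiff ℝ 1 (fun p : ℝ × ℝ => energy F u p.1 p.2) := by
  have h1 := w.smooth_pdx_one
  have h2 := w.smooth_pdy_one
  have h3 : ContDiff ℝ 1 (fun p : ℝ × ℝ => F (u p.1 p.2)) :=
    (w.well.1.of_le (by norm_num)).comp w.smooth_one
  exact (((h1.pow 2).sub (h2.pow 2)).div_const 2).add h3

theorem contDiff_flux (w : Wave F c u) :
    ContDiff ℝ 1 (fun p : ℝ × ℝ => pdx u p.1 p.2 * pdy u p.1 p.2) :=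
  w.smooth_pdx_one.mul w.smooth_pdy_one

theorem hasDerivAt_flux_x (w : Wave F c u) (x y : ℝ) :
    HasDerivAt (fun t => pdx u t y * pdy u t y)
      (pdxx u x y * pdy u x y + pdx u x y * pdy (pdx u) x y) x :=
  (w.hasDerivAt_xx x y).mul (w.hasDerivAt_yx x y)

theorem hasDerivAt_flux_y (w : Wave F c u) (x y : ℝ) :
    HasDerivAt (fun t => pdx u x t * pdy u x t)
      (pdy (pdx u) x y * pdy u x y + pdx u x y * pdyy u x y) y :=
  (w.hasDerivAt_xy x y).mul (w.hasDerivAt_yy x y)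

theorem hasDerivAt_energy_y (w : Wave F c u) (x y : ℝ) :
    HasDerivAt (fun t => energy F u x t)
      (pdx u x y * pdy (pdx u) x y - pdy u x y * pdyy u x y + deriv F (u x y) * pdy u x y) y := by
  have h3 := (w.hasDerivAt_F (u x y)).comp y (w.hasDerivAt_y x y)
  exact (((((w.hasDerivAt_xy x y).pow 2).sub ((w.hasDerivAt_yy x y).pow 2)).div_const 2).add
    h3).congr_deriv (by norm_num; ring)

/-- The energy identity on a rectangle. -/
theorem energy_identity (w : Wave F c u) (a b p q : ℝ) :
    (∫ x in a..b, energy F u x q) - ∫ x in a..b, energy F u x p =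
      c * (∫ x in a..b, ∫ y in p..q, pdy u x y ^ 2) +
        ((∫ y in p..q, pdx u b y * pdy u b y) - ∫ y in p..q, pdx u a y * pdy u a y) := by
  have h := integral_divergence (f := fun x y => pdx u x y * pdy u x y)
    (g := fun x y => -energy F u x y) w.contDiff_flux w.contDiff_energy.neg
    w.hasDerivAt_flux_x (fun x y => (w.hasDerivAt_energy_y x y).fun_neg) a b p q
  have e : ∀ x y, pdxx u x y * pdy u x y + pdx u x y * pdy (pdx u) x y +
      -(pdx u x y * pdy (pdx u) x y - pdy u x y * pdyy u x y + deriv F (u x y) * pdy u x y) =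
      -c * pdy u x y ^ 2 := by
    intro x y
    rw [← w.pde x y]; ring
  simp_rw [e, intervalIntegral.integral_const_mul, intervalIntegral.integral_neg] at h
  linarith

theorem integral_pdy (w : Wave F c u) (x p q : ℝ) :
    ∫ y in p..q, pdy u x y = u x q - u x p :=
  intervalIntegral.integral_eq_sub_of_hasDerivAt (fun y _ => w.hasDerivAt_y x y)
    ((continuous_slice_y w.smooth_pdy.continuous x).intervalIntegrable _ _)

theorem integral_abs_flux_le (w : Wave F c u) (b : Bound F u C) (x : ℝ) {p q : ℝ} (hpq : p ≤ q) :
    |∫ y in p..q, pdx u x y * pdy u x y| ≤ C * (u x q - u x p) := by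
  have hx := continuous_slice_y w.smooth_pdx.continuous x
  have hy := continuous_slice_y w.smooth_pdy.continuous x
  refine (intervalIntegral.abs_integral_le_integral_abs hpq).trans ?_
  rw [← w.integral_pdy, ← intervalIntegral.integral_const_mul]
  refine intervalIntegral.integral_mono_on hpq ((hx.mul hy).abs.intervalIntegrable _ _)
    ((continuous_const.mul hy).intervalIntegrable _ _) fun y _ => ?_
  rw [abs_mul, abs_of_pos (w.pdy_pos x y)]
  exact mul_le_mul_of_nonneg_right (b.dx x y) (w.pdy_pos x y).le

theorem integral_abs_flux_le_two (w : Wave F c u) (b : Bound F u C) (x : ℝ) {p q : ℝ}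
    (hpq : p ≤ q) : |∫ y in p..q, pdx u x y * pdy u x y| ≤ 2 * C := by
  refine (w.integral_abs_flux_le b x hpq).trans ?_
  nlinarith [w.lt_one x q, w.neg_one_lt x p, b.pos]

theorem abs_energy_le (w : Wave F c u) (b : Bound F u C) (x y : ℝ) :
    |energy F u x y| ≤ C ^ 2 + C := by
  have h1 := b.dx x y
  have h2 := b.dy x y
  have h3 := b.well _ (w.mem_Icc x y)
  have h4 := w.F_nonneg (w.mem_Icc x y)
  have h5 : pdx u x y ^ 2 ≤ C ^ 2 := sq_le_sq' (abs_le.1 h1).1 (abs_le.1 h1).2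
  have h6 : pdy u x y ^ 2 ≤ C ^ 2 := pow_le_pow_left₀ (w.pdy_pos x y).le h2 2
  unfold energy
  exact abs_le.2 ⟨by nlinarith [sq_nonneg (pdx u x y)], by nlinarith [sq_nonneg (pdy u x y)]⟩

theorem tendsto_energy_of_tendsto (w : Wave F c u) (b : Bound F u C) (x : ℝ) {l : Filter ℝ}
    {s : ℝ} (hs : s = 1 ∨ s = -1) (h : Tendsto (fun y => u x y) l (nhds s)) :
    Tendsto (fun y => energy F u x y) l (nhds 0) := by
  have hF : Tendsto (fun y => F (u x y)) l (nhds 0) := by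
    have := (w.continuous_F.tendsto s).comp h
    have h0 : F s = 0 := by
      rcases hs with rfl | rfl
      · exact w.well.2.2.2.2.2.2.2.2
      · exact w.well.2.2.2.2.2.2.2.1
    rwa [h0] at this
  have hg : Tendsto (fun y => 4 * C * |s - u x y|) l (nhds 0) := by
    have := ((tendsto_const_nhds (x := s)).sub h).abs.const_mul (4 * C)
    simpa using this
  have hC := b.pos
  have hx : ∀ y, pdx u x y ^ 2 ≤ 4 * C * |s - u x y| := by
    intro y
    rcases hs with rfl | rfl
    · exact (b.sq_dx_le w x y).trans (mul_le_mul_of_nonneg_left (le_abs_self _) (by positivity))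
    · refine (b.sq_dx_le' w x y).trans (mul_le_mul_of_nonneg_left ?_ (by positivity))
      rw [abs_sub_comm, sub_neg_eq_add, add_comm]
      exact le_abs_self _
  have hy : ∀ y, pdy u x y ^ 2 ≤ 4 * C * |s - u x y| := by
    intro y
    rcases hs with rfl | rfl
    · exact (b.sq_dy_le w x y).trans (mul_le_mul_of_nonneg_left (le_abs_self _) (by positivity))
    · refine (b.sq_dy_le' w x y).trans (mul_le_mul_of_nonneg_left ?_ (by positivity))
      rw [abs_sub_comm, sub_neg_eq_add, add_comm]
      exact le_abs_self _
  have tx : Tendsto (fun y => pdx u x y ^ 2) l (nhds 0) :=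
    squeeze_zero (fun y => sq_nonneg _) hx hg
  have ty : Tendsto (fun y => pdy u x y ^ 2) l (nhds 0) :=
    squeeze_zero (fun y => sq_nonneg _) hy hg
  have := ((tx.sub ty).div_const 2).add hF
  simpa [energy] using this

theorem tendsto_integral_energy (w : Wave F c u) (a b : ℝ) {l : Filter ℝ} [l.IsCountablyGenerated]
    {s : ℝ} (hs : s = 1 ∨ s = -1) (h : ∀ x, Tendsto (fun y => u x y) l (nhds s)) :
    Tendsto (fun y => ∫ x in a..b, energy F u x y) l (nhds 0) := by
  obtain ⟨C, bd⟩ := w.exists_bound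
  have := intervalIntegral.tendsto_integral_filter_of_dominated_convergence (μ := volume)
    (F := fun y x => energy F u x y) (f := fun _ => 0) (l := l) (a := a) (b := b)
    (fun _ => C ^ 2 + C)
    (Eventually.of_forall fun y =>
      (continuous_slice_x w.contDiff_energy.continuous y).aestronglyMeasurable)
    (Eventually.of_forall fun y => Eventually.of_forall fun x _ => w.abs_energy_le bd x y)
    intervalIntegrable_const
    (Eventually.of_forall fun x _ => w.tendsto_energy_of_tendsto bd x hs (h x))
  simpa using this

theorem eventually_integral_energy_le (w : Wave F c u) (a b : ℝ) {ε : ℝ} (hε : 0 < ε) :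
    (∀ᶠ y in atTop, |∫ x in a..b, energy F u x y| ≤ ε) ∧
      ∀ᶠ y in atBot, |∫ x in a..b, energy F u x y| ≤ ε := by
  have h1 := (w.tendsto_integral_energy a b (Or.inl rfl) w.tendsto_atTop).abs
  have h2 := (w.tendsto_integral_energy a b (Or.inr rfl) w.tendsto_atBot).abs
  rw [abs_zero] at h1 h2
  exact ⟨h1.eventually_le_const hε, h2.eventually_le_const hε⟩

theorem integral_sq_mono (w : Wave F c u) {a b p q p' q' : ℝ} (hab : a ≤ b) (hp : p' ≤ p)
    (hpq : p ≤ q) (hq : q ≤ q') :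
    ∫ x in a..b, ∫ y in p..q, pdy u x y ^ 2 ≤ ∫ x in a..b, ∫ y in p'..q', pdy u x y ^ 2 := by
  have hc : Continuous (fun p : ℝ × ℝ => pdy u p.1 p.2 ^ 2) := w.smooth_pdy.continuous.pow 2
  have hi : ∀ r s : ℝ, Continuous fun x => ∫ y in r..s, pdy u x y ^ 2 := fun r s =>
    intervalIntegral.continuous_parametric_intervalIntegral_of_continuous' hc r s
  refine intervalIntegral.integral_mono_on hab ((hi _ _).intervalIntegrable _ _)
    ((hi _ _).intervalIntegrable _ _) fun x _ => ?_
  exact intervalIntegral.integral_mono_interval hp hpq hq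
    (Eventually.of_forall fun y => sq_nonneg _)
    ((continuous_slice_y (f := fun x y => pdy u x y ^ 2) hc x).intervalIntegrable _ _)

theorem integral_sq_le (w : Wave F c u) (bd : Bound F u C) {a b p q : ℝ} (hab : a ≤ b)
    (hpq : p ≤ q) : c * ∫ x in a..b, ∫ y in p..q, pdy u x y ^ 2 ≤ 2 + 4 * C := by
  obtain ⟨h1, h2⟩ := w.eventually_integral_energy_le a b one_pos
  obtain ⟨q', hq1, hq2⟩ := (h1.and (eventually_ge_atTop q)).exists
  obtain ⟨p', hp1, hp2⟩ := (h2.and (eventually_le_atBot p)).exists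
  have hm := mul_le_mul_of_nonneg_left (w.integral_sq_mono hab hp2 hpq hq2) w.speed.le
  have hid := w.energy_identity a b p' q'
  have hle : p' ≤ q' := hp2.trans (hpq.trans hq2)
  have f1 := abs_le.1 (w.integral_abs_flux_le_two bd a hle)
  have f2 := abs_le.1 (w.integral_abs_flux_le_two bd b hle)
  have := abs_le.1 hq1
  have := abs_le.1 hp1
  linarith

/-- The energy of every horizontal segment is bounded from above. -/
theorem integral_energy_le (w : Wave F c u) (bd : Bound F u C) {a b : ℝ} (hab : a ≤ b) (y : ℝ) :
    ∫ x in a..b, energy F u x y ≤ 3 + 8 * C := by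
  obtain ⟨-, h2⟩ := w.eventually_integral_energy_le a b one_pos
  obtain ⟨p, hp1, hp2⟩ := (h2.and (eventually_le_atBot y)).exists
  have hid := w.energy_identity a b p y
  have f1 := abs_le.1 (w.integral_abs_flux_le_two bd a hp2)
  have f2 := abs_le.1 (w.integral_abs_flux_le_two bd b hp2)
  have f3 := w.integral_sq_le bd hab hp2
  have := abs_le.1 hp1
  linarith

theorem setIntegral_sq_eq (w : Wave F c u) {a b p q : ℝ} (hab : a ≤ b) (hpq : p ≤ q) :
    ∫ z in Set.Ioc a b ×ˢ Set.Ioc p q, pdy u z.1 z.2 ^ 2 =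
      ∫ x in a..b, ∫ y in p..q, pdy u x y ^ 2 := by
  have hc : Continuous (fun p : ℝ × ℝ => pdy u p.1 p.2 ^ 2) := w.smooth_pdy.continuous.pow 2
  have hi : IntegrableOn (fun p : ℝ × ℝ => pdy u p.1 p.2 ^ 2) (Set.Ioc a b ×ˢ Set.Ioc p q)
      (volume.prod volume) :=
    (hc.continuousOn.integrableOn_compact (isCompact_Icc.prod isCompact_Icc)).mono_set
      (Set.prod_mono Set.Ioc_subset_Icc_self Set.Ioc_subset_Icc_self)
  rw [Measure.volume_eq_prod, setIntegral_prod _ hi, intervalIntegral.integral_of_le hab]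
  simp_rw [intervalIntegral.integral_of_le hpq]

theorem integrable_sq (w : Wave F c u) : Integrable (fun z : ℝ × ℝ => pdy u z.1 z.2 ^ 2) := by
  obtain ⟨C, bd⟩ := w.exists_bound
  have hc : Continuous (fun p : ℝ × ℝ => pdy u p.1 p.2 ^ 2) := w.smooth_pdy.continuous.pow 2
  have hcov : AECover (volume : Measure (ℝ × ℝ)) atTop
      (fun n : ℕ => Set.Ioc (-(n : ℝ)) n ×ˢ Set.Ioc (-(n : ℝ)) n) := by
    refine ⟨Eventually.of_forall fun z => ?_, fun n => measurableSet_Ioc.prod measurableSet_Ioc⟩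
    have := tendsto_natCast_atTop_atTop (R := ℝ)
    filter_upwards [this.eventually_gt_atTop |z.1|, this.eventually_gt_atTop |z.2|] with n h1 h2
    have h1 := abs_lt.1 h1
    have h2 := abs_lt.1 h2
    exact ⟨⟨h1.1, h1.2.le⟩, h2.1, h2.2.le⟩
  refine hcov.integrable_of_integral_norm_bounded ((2 + 4 * C) / c) (fun n => ?_)
    (Eventually.of_forall fun n => ?_)
  · exact (hc.continuousOn.integrableOn_compact (isCompact_Icc.prod isCompact_Icc)).mono_set
      (Set.prod_mono Set.Ioc_subset_Icc_self Set.Ioc_subset_Icc_self)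
  · have hn : -(n : ℝ) ≤ n := by linarith [n.cast_nonneg (α := ℝ)]
    simp_rw [Real.norm_eq_abs, abs_sq]
    rw [w.setIntegral_sq_eq hn hn, le_div_iff₀ w.speed, mul_comm]
    exact w.integral_sq_le bd hn hn

/-- The derivative in the direction of motion decays at infinity. -/
theorem exists_far_pdy_le (w : Wave F c u) {ε : ℝ} (hε : 0 < ε) :
    ∃ R, ∀ x y, Far R x y → pdy u x y ≤ ε := by
  obtain ⟨C, bd⟩ := w.exists_bound
  have hC := bd.pos
  obtain ⟨r, hr, hr1, hr2⟩ : ∃ r > 0, r ≤ 1 ∧ (C * C + C) * r ≤ ε / 2 := by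
    refine ⟨min 1 (ε / 2 / (C * C + C)), by positivity, min_le_left _ _, ?_⟩
    calc (C * C + C) * min 1 (ε / 2 / (C * C + C))
        ≤ (C * C + C) * (ε / 2 / (C * C + C)) := by gcongr; exact min_le_right _ _
      _ = ε / 2 := by field_simp
  let S : ℕ → Set (ℝ × ℝ) := fun n => {z | Far n z.1 z.2}
  have hSm : ∀ n, MeasurableSet (S n) := fun n => by
    refine IsClosed.measurableSet ?_
    exact (isClosed_le continuous_const continuous_fst.abs).union
      (isClosed_le continuous_const continuous_snd.abs)
  have hSa : Antitone S := fun m n hmn z hz => Far.mono hz (Nat.cast_le.2 hmn)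
  have hSi : ⋂ n, S n = ∅ := by
    ext z
    simp only [Set.mem_iInter, Set.mem_empty_iff_false, iff_false, not_forall]
    obtain ⟨n, hn⟩ := exists_nat_gt (max |z.1| |z.2|)
    refine ⟨n, fun h => ?_⟩
    rcases h with h | h
    · exact absurd (h.trans (le_max_left _ _)) (not_le.2 hn)
    · exact absurd (h.trans (le_max_right _ _)) (not_le.2 hn)
  have ht := tendsto_setIntegral_of_antitone (f := fun z : ℝ × ℝ => pdy u z.1 z.2 ^ 2) hSm hSa
    ⟨0, w.integrable_sq.integrableOn⟩
  rw [hSi, Measure.restrict_empty, integral_zero_measure] at ht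
  obtain ⟨n, hn⟩ := (ht.eventually_lt_const
    (show 0 < (ε / 2) ^ 2 * ((2 * r) * (2 * r)) by positivity)).exists
  refine ⟨n + r, fun x y hxy => ?_⟩
  by_contra hlt
  push Not at hlt
  have hsub : Set.Icc (x - r) (x + r) ×ˢ Set.Icc (y - r) (y + r) ⊆ S n := by
    rintro ⟨x', y'⟩ ⟨h1, h2⟩
    simp only at h1 h2
    exact hxy.of_near (abs_le.2 ⟨by linarith [h1.1], by linarith [h1.2]⟩)
      (abs_le.2 ⟨by linarith [h2.1], by linarith [h2.2]⟩)
  have hlow : ∀ z ∈ Set.Icc (x - r) (x + r) ×ˢ Set.Icc (y - r) (y + r),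
      (ε / 2) ^ 2 ≤ pdy u z.1 z.2 ^ 2 := by
    rintro ⟨x', y'⟩ ⟨h1, h2⟩
    simp only at h1 h2 ⊢
    have hx' : |x' - x| ≤ r := abs_le.2 ⟨by linarith [h1.1], by linarith [h1.2]⟩
    have hy' : |y' - y| ≤ r := abs_le.2 ⟨by linarith [h2.1], by linarith [h2.2]⟩
    have d1 := abs_sub_le_of_hasDerivAt (a := x) (b := x') (fun t => w.hasDerivAt_yx t y)
      (fun t _ => bd.abs_dxy t y)
    have d2 := abs_sub_le_of_hasDerivAt (a := y) (b := y') (fun t => w.hasDerivAt_yy x' t)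
      (fun t _ => bd.dyy x' t)
    have d1' : C * C * |x' - x| ≤ C * C * r := by gcongr
    have d2' : C * |y' - y| ≤ C * r := by gcongr
    have := (abs_le.1 d1).1
    have := (abs_le.1 d2).1
    refine pow_le_pow_left₀ (by positivity) ?_ 2
    nlinarith
  have hm : MeasurableSet (Set.Icc (x - r) (x + r) ×ˢ Set.Icc (y - r) (y + r)) :=
    measurableSet_Icc.prod measurableSet_Icc
  have hvol : (volume : Measure (ℝ × ℝ)).real (Set.Icc (x - r) (x + r) ×ˢ Set.Icc (y - r) (y + r)) =
      (2 * r) * (2 * r) := by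
    rw [Measure.volume_eq_prod, measureReal_prod_prod, Real.volume_real_Icc_of_le (by linarith),
      Real.volume_real_Icc_of_le (by linarith)]
    ring
  have hfin : (volume : Measure (ℝ × ℝ)) (Set.Icc (x - r) (x + r) ×ˢ Set.Icc (y - r) (y + r)) ≠ ⊤ :=
    (isCompact_Icc.prod isCompact_Icc).measure_lt_top.ne
  have h1 := setIntegral_ge_of_const_le_real hm hfin hlow w.integrable_sq.integrableOn
  rw [hvol] at h1
  have h2 := setIntegral_mono_set (μ := volume) (f := fun z : ℝ × ℝ => pdy u z.1 z.2 ^ 2)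
    (s := Set.Icc (x - r) (x + r) ×ˢ Set.Icc (y - r) (y + r)) w.integrable_sq.integrableOn
    (Eventually.of_forall fun z => sq_nonneg _) hsub.eventuallyLE
  linarith

theorem exists_far_abs_dxy_le (w : Wave F c u) {ε : ℝ} (hε : 0 < ε) :
    ∃ R, ∀ x y, Far R x y → |pdy (pdx u) x y| ≤ ε := by
  obtain ⟨C, bd⟩ := w.exists_bound
  have hC := bd.pos
  obtain ⟨R, hR⟩ := w.exists_far_pdy_le (show 0 < ε / C by positivity)
  refine ⟨R + 1, fun x y hxy => ?_⟩
  refine (bd.dxy x y (ε / C) fun x' y' hx hy => hR x' y' (hxy.of_near hx hy)).trans ?_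
  exact le_of_eq (by field_simp)

end Wave

namespace Wave

variable {F : ℝ → ℝ} {c : ℝ} {u : ℝ → ℝ → ℝ} {C : ℝ}

/-! ### Equipartition at infinity -/

/-- The momentum identity on a rectangle. -/
theorem momentum_identity (w : Wave F c u) (a b p q : ℝ) :
    ∫ x in a..b, ∫ y in p..q, -c * (pdx u x y * pdy u x y) =
      ((∫ x in a..b, pdx u x q * pdy u x q) - ∫ x in a..b, pdx u x p * pdy u x p) +
        ((∫ y in p..q, ((pdx u b y ^ 2 - pdy u b y ^ 2) / 2 - F (u b y))) -
          ∫ y in p..q, ((pdx u a y ^ 2 - pdy u a y ^ 2) / 2 - F (u a y))) := by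
  have hS : ContDiff ℝ 1 (fun p : ℝ × ℝ =>
      (pdx u p.1 p.2 ^ 2 - pdy u p.1 p.2 ^ 2) / 2 - F (u p.1 p.2)) := by
    have h3 : ContDiff ℝ 1 (fun p : ℝ × ℝ => F (u p.1 p.2)) :=
      (w.well.1.of_le (by norm_num)).comp w.smooth_one
    exact (((w.smooth_pdx_one.pow 2).sub (w.smooth_pdy_one.pow 2)).div_const 2).sub h3
  have hd : ∀ x y, HasDerivAt (fun t => (pdx u t y ^ 2 - pdy u t y ^ 2) / 2 - F (u t y))
      (pdx u x y * pdxx u x y - pdy u x y * pdy (pdx u) x y - deriv F (u x y) * pdx u x y) x := by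
    intro x y
    have h3 := (w.hasDerivAt_F (u x y)).comp x (w.hasDerivAt_x x y)
    exact (((((w.hasDerivAt_xx x y).pow 2).sub ((w.hasDerivAt_yx x y).pow 2)).div_const 2).sub
      h3).congr_deriv (by norm_num; ring)
  have h := integral_divergence
    (f := fun x y => (pdx u x y ^ 2 - pdy u x y ^ 2) / 2 - F (u x y))
    (g := fun x y => pdx u x y * pdy u x y) hS w.contDiff_flux hd w.hasDerivAt_flux_y a b p q
  rw [← h]
  congr 1
  funext x
  congr 1
  funext y
  rw [← w.pde x y]; ring

theorem hasDerivAt_discrepancy (w : Wave F c u) (x y : ℝ) :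
    HasDerivAt (fun t => pdx u x t ^ 2 / 2 - F (u x t))
      (pdx u x y * pdy (pdx u) x y - deriv F (u x y) * pdy u x y) y := by
  have h3 := (w.hasDerivAt_F (u x y)).comp y (w.hasDerivAt_y x y)
  exact ((((w.hasDerivAt_xy x y).pow 2).div_const 2).sub h3).congr_deriv (by norm_num; ring)

/-- The discrepancy `u_x² / 2 - F(u)` decays at infinity. -/
theorem exists_far_discrepancy_le (w : Wave F c u) {ε : ℝ} (hε : 0 < ε) :
    ∃ R, ∀ x y, Far R x y → |pdx u x y ^ 2 / 2 - F (u x y)| ≤ ε := by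
  obtain ⟨C, bd⟩ := w.exists_bound
  have hC := bd.pos
  have hc := w.speed
  set L := 2 * (4 + 8 * C) / ε with hL
  have hL0 : 0 < L := by positivity
  set A := 2 + 4 * C + (c + 2) * C * L with hA
  have hA0 : 0 < A := by positivity
  set e := min 1 (ε / 2 / A) with he
  have he0 : 0 < e := by positivity
  have he1 : e ≤ 1 := min_le_left _ _
  have heA : A * e ≤ ε / 2 := by
    calc A * e ≤ A * (ε / 2 / A) := by gcongr; exact min_le_right _ _
      _ = ε / 2 := by field_simp
  obtain ⟨R1, hR1⟩ := w.exists_far_pdy_le he0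
  obtain ⟨R2, hR2⟩ := w.exists_far_abs_dxy_le he0
  refine ⟨max R1 R2 + (L + 1), fun x₀ y₀ hfar => ?_⟩
  have near : ∀ x ∈ Set.Icc x₀ (x₀ + L), ∀ y ∈ Set.Icc y₀ (y₀ + 1),
      pdy u x y ≤ e ∧ |pdy (pdx u) x y| ≤ e := by
    intro x hx y hy
    have hf : Far (max R1 R2) x y := hfar.of_near
      (abs_le.2 ⟨by linarith [hx.1], by linarith [hx.2]⟩)
      (abs_le.2 ⟨by linarith [hy.1], by linarith [hy.2]⟩)
    exact ⟨hR1 x y (hf.mono (le_max_left _ _)), hR2 x y (hf.mono (le_max_right _ _))⟩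
  have hy0 : y₀ ∈ Set.Icc y₀ (y₀ + 1) := ⟨le_rfl, by linarith⟩
  have hy1 : y₀ + 1 ∈ Set.Icc y₀ (y₀ + 1) := ⟨by linarith, le_rfl⟩
  obtain ⟨x₁, hx₁, hex⟩ : ∃ x₁ ∈ Set.Icc x₀ (x₀ + L), energy F u x₁ y₀ ≤ (4 + 8 * C) / L := by
    by_contra hno
    push Not at hno
    have h1 : ∫ _ in x₀..(x₀ + L), (4 + 8 * C) / L ≤ ∫ x in x₀..(x₀ + L), energy F u x y₀ :=
      intervalIntegral.integral_mono_on (by linarith) intervalIntegrable_const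
        ((continuous_slice_x w.contDiff_energy.continuous y₀).intervalIntegrable _ _)
        (fun x hx => (hno x hx).le)
    have h2 := w.integral_energy_le bd (show x₀ ≤ x₀ + L by linarith) y₀
    rw [intervalIntegral.integral_const, add_sub_cancel_left, smul_eq_mul,
      mul_div_cancel₀ _ hL0.ne'] at h1
    linarith
  have hx₁' : ∀ x ∈ Set.Icc x₀ x₁, x ∈ Set.Icc x₀ (x₀ + L) := fun x hx => ⟨hx.1, hx.2.trans hx₁.2⟩
  have hx₀ : x₀ ∈ Set.Icc x₀ (x₀ + L) := ⟨le_rfl, by linarith⟩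
  have hflux : ∀ x ∈ Set.Icc x₀ (x₀ + L), ∀ y ∈ Set.Icc y₀ (y₀ + 1),
      |pdx u x y * pdy u x y| ≤ C * e := by
    intro x hx y hy
    rw [abs_mul, abs_of_pos (w.pdy_pos x y)]
    exact mul_le_mul (bd.dx x y) (near x hx y hy).1 (w.pdy_pos x y).le hC.le
  have hIoc : Set.uIoc x₀ x₁ ⊆ Set.Icc x₀ (x₀ + L) := by
    rw [Set.uIoc_of_le hx₁.1]
    exact fun x hx => hx₁' x ⟨hx.1.le, hx.2⟩
  have hIocy : Set.uIoc y₀ (y₀ + 1) ⊆ Set.Icc y₀ (y₀ + 1) := by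
    rw [Set.uIoc_of_le (by linarith)]
    exact Set.Ioc_subset_Icc_self
  have hlen : |x₁ - x₀| ≤ L := abs_le.2 ⟨by linarith [hx₁.1], by linarith [hx₁.2]⟩
  have hslice : ∀ y ∈ Set.Icc y₀ (y₀ + 1), |∫ x in x₀..x₁, pdx u x y * pdy u x y| ≤ C * e * L := by
    intro y hy
    rw [← Real.norm_eq_abs]
    refine (intervalIntegral.norm_integral_le_of_norm_le_const (C := C * e)
      (fun x hx => by rw [Real.norm_eq_abs]; exact hflux x (hIoc hx) y hy)).trans ?_
    gcongr
  have hdouble : |∫ x in x₀..x₁, ∫ y in y₀..(y₀ + 1), -c * (pdx u x y * pdy u x y)| ≤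
      c * (C * e) * L := by
    rw [← Real.norm_eq_abs]
    refine (intervalIntegral.norm_integral_le_of_norm_le_const (C := c * (C * e))
      (fun x hx => ?_)).trans ?_
    · refine (intervalIntegral.norm_integral_le_of_norm_le_const (C := c * (C * e))
        (fun y hy => ?_)).trans ?_
      · rw [Real.norm_eq_abs, abs_mul, abs_neg, abs_of_pos hc]
        exact mul_le_mul_of_nonneg_left (hflux x (hIoc hx) y (hIocy hy)) hc.le
      · simp
    · gcongr
  have hcol : ∀ x ∈ Set.Icc x₀ (x₀ + L),
      |(∫ y in y₀..(y₀ + 1), ((pdx u x y ^ 2 - pdy u x y ^ 2) / 2 - F (u x y))) -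
        (pdx u x y₀ ^ 2 / 2 - F (u x y₀))| ≤ 2 * C * e + e / 2 := by
    intro x hx
    have hcont : Continuous (fun y => (pdx u x y ^ 2 - pdy u x y ^ 2) / 2 - F (u x y)) := by
      have h1 := continuous_slice_y w.smooth_pdx.continuous x
      have h2 := continuous_slice_y w.smooth_pdy.continuous x
      have h3 := w.continuous_F.comp (continuous_slice_y w.continuous x)
      exact (((h1.pow 2).sub (h2.pow 2)).div_const 2).sub h3
    have hconst : (pdx u x y₀ ^ 2 / 2 - F (u x y₀)) =
        ∫ _ in y₀..(y₀ + 1), (pdx u x y₀ ^ 2 / 2 - F (u x y₀)) := by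
      rw [intervalIntegral.integral_const]; simp
    rw [hconst, ← intervalIntegral.integral_sub (hcont.intervalIntegrable _ _)
      intervalIntegrable_const, ← Real.norm_eq_abs]
    refine (intervalIntegral.norm_integral_le_of_norm_le_const (C := 2 * C * e + e / 2)
      (fun y hy => ?_)).trans (by simp)
    have hy' := hIocy hy
    have hd := abs_sub_le_of_hasDerivAt (a := y₀) (b := y) (C := 2 * C * e)
      (fun t => w.hasDerivAt_discrepancy x t) (fun t ht => by
        have ht' : t ∈ Set.Icc y₀ (y₀ + 1) := by
          rw [Set.uIcc_of_le hy'.1] at ht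
          exact ⟨ht.1, ht.2.trans hy'.2⟩
        have n := near x hx t ht'
        have b1 := bd.dx x t
        have b2 := bd.well' _ (w.mem_Icc x t)
        calc |pdx u x t * pdy (pdx u) x t - deriv F (u x t) * pdy u x t|
            ≤ |pdx u x t * pdy (pdx u) x t| + |deriv F (u x t) * pdy u x t| := abs_sub _ _
          _ = |pdx u x t| * |pdy (pdx u) x t| + |deriv F (u x t)| * pdy u x t := by
              rw [abs_mul, abs_mul, abs_of_pos (w.pdy_pos x t)]
          _ ≤ C * e + C * e := by
              have := w.pdy_pos x t
              gcongr
              · exact n.2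
              · exact n.1
          _ = 2 * C * e := by ring)
    have hlen' : 2 * C * e * |y - y₀| ≤ 2 * C * e * 1 := by
      gcongr
      exact abs_le.2 ⟨by linarith [hy'.1], by linarith [hy'.2]⟩
    have hsq : pdy u x y ^ 2 ≤ e := by
      have := (near x hx y hy').1
      have h0 := w.pdy_pos x y
      nlinarith
    have hsq0 := sq_nonneg (pdy u x y)
    have hd' := abs_le.1 hd
    rw [Real.norm_eq_abs]
    exact abs_le.2 ⟨by linarith [hd'.1], by linarith [hd'.2]⟩
  have hid := w.momentum_identity x₀ x₁ y₀ (y₀ + 1)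
  have k1 := abs_le.1 (hcol x₀ hx₀)
  have k2 := abs_le.1 (hcol x₁ hx₁)
  have k3 := abs_le.1 hdouble
  have k4 := abs_le.1 (hslice y₀ hy0)
  have k5 := abs_le.1 (hslice (y₀ + 1) hy1)
  have hP1 : |pdx u x₁ y₀ ^ 2 / 2 - F (u x₁ y₀)| ≤ ε / 2 + e / 2 := by
    have h1 : (4 + 8 * C) / L = ε / 2 := by rw [hL]; field_simp
    have h2 := w.F_nonneg (w.mem_Icc x₁ y₀)
    have h3 : pdy u x₁ y₀ ^ 2 ≤ e := by
      have := (near x₁ hx₁ y₀ hy0).1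
      have h0 := w.pdy_pos x₁ y₀
      nlinarith
    rw [h1] at hex
    unfold energy at hex
    have := sq_nonneg (pdx u x₁ y₀)
    exact abs_le.2 ⟨by linarith, by linarith⟩
  have k6 := abs_le.1 hP1
  have htot : ε / 2 + e / 2 + 2 * (2 * C * e + e / 2) + c * (C * e) * L + 2 * (C * e * L) ≤ ε := by
    have : e / 2 + 2 * (2 * C * e + e / 2) + c * (C * e) * L + 2 * (C * e * L) ≤ A * e := by
      rw [hA]; nlinarith
    linarith
  exact abs_le.2 ⟨by linarith, by linarith⟩

/-- Away from the wells, `u_x` does not vanish at infinity. -/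
theorem exists_far_band (w : Wave F c u) {δ : ℝ} (hδ : 0 < δ) :
    ∃ κ > 0, ∃ R, ∀ x y, Far R x y → |u x y| ≤ 1 - δ → κ ≤ |pdx u x y| := by
  rcases lt_or_ge 1 δ with h1 | h1
  · exact ⟨1, one_pos, 0, fun x y _ h => by linarith [abs_nonneg (u x y)]⟩
  obtain ⟨s, hs, hmin⟩ := (isCompact_Icc (a := -1 + δ) (b := 1 - δ)).exists_isMinOn
    ⟨0, by constructor <;> linarith⟩ w.continuous_F.continuousOn
  have hpos : 0 < F s := w.F_pos (by linarith [hs.1]) (by linarith [hs.2])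
  obtain ⟨R, hR⟩ := w.exists_far_discrepancy_le (show 0 < F s / 2 by positivity)
  refine ⟨√(F s), Real.sqrt_pos.2 hpos, R, fun x y hf hb => Real.sqrt_le_iff.2 ⟨abs_nonneg _, ?_⟩⟩
  have hb' := abs_le.1 hb
  have h2 : F s ≤ F (u x y) := hmin ⟨by linarith, by linarith⟩
  have h3 := (abs_le.1 (hR x y hf)).1
  rw [sq_abs]
  linarith

end Wave

/-- A continuous nonvanishing function on a preconnected set has constant sign. -/
theorem pos_of_preconnected {α : Type*} [TopologicalSpace α] {s : Set α} (hs : IsPreconnected s)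
    {f : α → ℝ} (hf : ContinuousOn f s) (h0 : ∀ a ∈ s, f a ≠ 0) {a b : α} (ha : a ∈ s)
    (hb : b ∈ s) (hpos : 0 < f a) : 0 < f b := by
  by_contra hneg
  obtain ⟨z, hz, hz0⟩ := hs.intermediate_value hb ha hf ⟨not_lt.1 hneg, hpos.le⟩
  exact h0 z hz hz0

namespace Wave

variable {F : ℝ → ℝ} {c : ℝ} {u : ℝ → ℝ → ℝ} {C : ℝ}

theorem Bound.abs_dx_le (b : Bound F u C) (w : Wave F c u) {η x y : ℝ} (hη : 0 ≤ η)
    (h : 1 - η ^ 2 / (4 * C) ≤ |u x y|) : |pdx u x y| ≤ η := by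
  have hC := b.pos
  have key : ∀ t, 1 - η ^ 2 / (4 * C) ≤ 1 - t → 4 * C * t ≤ η ^ 2 := by
    intro t ht
    have h1 : t ≤ η ^ 2 / (4 * C) := by linarith
    rw [le_div_iff₀ (by positivity)] at h1
    linarith
  refine abs_le_of_sq_le_sq ?_ hη
  rcases abs_cases (u x y) with ⟨h1, _⟩ | ⟨h1, _⟩
  · exact (b.sq_dx_le w x y).trans (key _ (by linarith))
  · exact (b.sq_dx_le' w x y).trans (key _ (by linarith))

/-! ### Level curves and the sign of the horizontal derivative -/

theorem exists_level (w : Wave F c u) :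
    ∃ Y : ℝ → ℝ → ℝ, (∀ x s, -1 < s → s < 1 → u x (Y x s) = s) ∧
      ContinuousOn (fun p : ℝ × ℝ => Y p.1 p.2) (Set.univ ×ˢ Set.Ioo (-1) 1) := by
  have hex : ∀ x s : ℝ, ∃ y, -1 < s → s < 1 → u x y = s := by
    intro x s
    by_cases hs : -1 < s ∧ s < 1
    · obtain ⟨a, ha⟩ := ((w.tendsto_atBot x).eventually_lt_const hs.1).exists
      obtain ⟨b, hb⟩ := ((w.tendsto_atTop x).eventually_const_lt hs.2).exists
      obtain ⟨y, hy⟩ := mem_range_of_exists_le_of_exists_ge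
        (continuous_slice_y w.continuous x) ⟨a, ha.le⟩ ⟨b, hb.le⟩
      exact ⟨y, fun _ _ => hy⟩
    · exact ⟨0, fun h1 h2 => absurd ⟨h1, h2⟩ hs⟩
  choose Y hY using hex
  refine ⟨Y, hY, ?_⟩
  have hopen : IsOpen ((Set.univ : Set ℝ) ×ˢ Set.Ioo (-1 : ℝ) 1) := isOpen_univ.prod isOpen_Ioo
  intro p hp
  refine ContinuousAt.continuousWithinAt (tendsto_order.2 ⟨fun a ha => ?_, fun a ha => ?_⟩)
  · have h1 : u p.1 a < p.2 := by
      rw [← hY p.1 p.2 hp.2.1 hp.2.2]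
      exact w.strictMono p.1 ha
    have hc : ContinuousAt (fun q : ℝ × ℝ => u q.1 a) p :=
      ((continuous_slice_x w.continuous a).comp continuous_fst).continuousAt
    filter_upwards [hc.eventually_lt continuousAt_snd h1, hopen.mem_nhds hp] with q hq hq'
    rw [← hY q.1 q.2 hq'.2.1 hq'.2.2] at hq
    exact (w.strictMono q.1).lt_iff_lt.1 hq
  · have h1 : p.2 < u p.1 a := by
      rw [← hY p.1 p.2 hp.2.1 hp.2.2]
      exact w.strictMono p.1 ha
    have hc : ContinuousAt (fun q : ℝ × ℝ => u q.1 a) p :=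
      ((continuous_slice_x w.continuous a).comp continuous_fst).continuousAt
    filter_upwards [continuousAt_snd.eventually_lt hc h1, hopen.mem_nhds hp] with q hq hq'
    rw [← hY q.1 q.2 hq'.2.1 hq'.2.2] at hq
    exact (w.strictMono q.1).lt_iff_lt.1 hq

theorem exists_zero (w : Wave F c u) (x : ℝ) : ∃ y, u x y = 0 := by
  obtain ⟨Y, hY, -⟩ := w.exists_level
  exact ⟨Y x 0, hY x 0 (by norm_num) (by norm_num)⟩

theorem band_sign (w : Wave F c u) {δ : ℝ} (hδ : 0 < δ) :
    ∃ κ > 0, ∃ B, (∀ x y, B ≤ x → |u x y| ≤ 1 - δ → κ ≤ pdx u x y) ∨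
      ∀ x y, B ≤ x → |u x y| ≤ 1 - δ → pdx u x y ≤ -κ := by
  obtain ⟨κ, hκ, R, hR⟩ := w.exists_far_band hδ
  refine ⟨κ, hκ, max R 0, ?_⟩
  obtain ⟨Y, hY, hYc⟩ := w.exists_level
  set s : Set (ℝ × ℝ) := Set.Ici (max R 0) ×ˢ Set.Icc (-1 + δ) (1 - δ) with hs
  have hsub : s ⊆ Set.univ ×ˢ Set.Ioo (-1) 1 := fun p hp =>
    ⟨trivial, by linarith [hp.2.1], by linarith [hp.2.2]⟩
  have hpre : IsPreconnected s := ((convex_Ici _).prod (convex_Icc _ _)).isPreconnected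
  have hcont : ContinuousOn (fun p : ℝ × ℝ => pdx u p.1 (Y p.1 p.2)) s :=
    w.smooth_pdx.continuous.comp_continuousOn (continuousOn_fst.prodMk (hYc.mono hsub))
  have hmem : ∀ x y, max R 0 ≤ x → |u x y| ≤ 1 - δ → (x, u x y) ∈ s ∧ Y x (u x y) = y := by
    intro x y hx hu
    have hu' := abs_le.1 hu
    refine ⟨⟨hx, by linarith, by linarith⟩, (w.strictMono x).injective ?_⟩
    exact hY x _ (by linarith) (by linarith)
  have hband : ∀ x y, max R 0 ≤ x → |u x y| ≤ 1 - δ → κ ≤ |pdx u x y| := fun x y hx hu =>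
    hR x y (Or.inl (((le_max_left _ _).trans hx).trans (le_abs_self _))) hu
  have hne : ∀ p ∈ s, pdx u p.1 (Y p.1 p.2) ≠ 0 := by
    intro p hp h0
    have h1 := hY p.1 p.2 (hsub hp).2.1 (hsub hp).2.2
    have h2 := hband p.1 (Y p.1 p.2) hp.1
      (by rw [h1]; exact abs_le.2 ⟨by linarith [hp.2.1], hp.2.2⟩)
    rw [h0, abs_zero] at h2
    linarith
  by_cases hpos : ∃ p ∈ s, 0 < pdx u p.1 (Y p.1 p.2)
  · obtain ⟨p, hp, hp0⟩ := hpos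
    refine Or.inl fun x y hx hu => ?_
    obtain ⟨h1, h2⟩ := hmem x y hx hu
    have h3 := pos_of_preconnected hpre hcont hne hp h1 hp0
    simp only [h2] at h3
    have h4 := hband x y hx hu
    rwa [abs_of_pos h3] at h4
  · push Not at hpos
    refine Or.inr fun x y hx hu => ?_
    obtain ⟨h1, h2⟩ := hmem x y hx hu
    have h3 := hpos _ h1
    simp only [h2] at h3
    have h4 := hband x y hx hu
    rw [abs_of_nonpos h3] at h4
    linarith

theorem exists_integral_sq_pos (w : Wave F c u) :
    0 < ∫ x in (0 : ℝ)..1, ∫ y in (0 : ℝ)..1, pdy u x y ^ 2 := by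
  have hc : Continuous (fun p : ℝ × ℝ => pdy u p.1 p.2 ^ 2) := w.smooth_pdy.continuous.pow 2
  have hi : Continuous fun x => ∫ y in (0 : ℝ)..1, pdy u x y ^ 2 :=
    intervalIntegral.continuous_parametric_intervalIntegral_of_continuous' hc 0 1
  refine intervalIntegral.intervalIntegral_pos_of_pos (hi.intervalIntegrable _ _)
    (fun x => ?_) one_pos
  refine intervalIntegral.intervalIntegral_pos_of_pos
    (((continuous_slice_y w.smooth_pdy.continuous x).pow 2).intervalIntegrable _ _)
    (fun y => ?_) one_pos
  have := w.pdy_pos x y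
  positivity

theorem exists_far_abs_dx (w : Wave F c u) {ε : ℝ} (hε : 0 < ε) :
    ∃ R, ∀ x y, Far R x y →
      |pdx u x y| ≤ √(2 * F (u x y)) + ε ∧ √(2 * F (u x y)) ≤ |pdx u x y| + ε := by
  obtain ⟨R, hR⟩ := w.exists_far_discrepancy_le (show 0 < ε ^ 2 / 2 by positivity)
  refine ⟨R, fun x y hf => ?_⟩
  have h1 := abs_le.1 (hR x y hf)
  have h2 := w.F_nonneg (w.mem_Icc x y)
  have h3 := Real.sqrt_nonneg (2 * F (u x y))
  have h4 := Real.sq_sqrt (show 0 ≤ 2 * F (u x y) by linarith)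
  have h5 := abs_nonneg (pdx u x y)
  have h6 := sq_abs (pdx u x y)
  constructor
  · refine abs_le_of_sq_le_sq ?_ (by positivity)
    nlinarith [mul_nonneg h3 hε.le]
  · refine (abs_le_of_sq_le_sq' ?_ (by positivity)).2
    nlinarith [mul_nonneg h5 hε.le]

theorem not_increasing_at_infinity (w : Wave F c u)
    (h : ∀ δ > 0, ∃ B, ∀ x y, B ≤ x → |u x y| ≤ 1 - δ → 0 ≤ pdx u x y) : False := by
  obtain ⟨C, bd⟩ := w.exists_bound
  have hC := bd.pos
  have hI := w.exists_integral_sq_pos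
  set I := ∫ x in (0 : ℝ)..1, ∫ y in (0 : ℝ)..1, pdy u x y ^ 2 with hIdef
  have hcI : 0 < c * I := mul_pos w.speed hI
  set ε := c * I / 24 with hε
  have hε0 : 0 < ε := by positivity
  obtain ⟨R, hR⟩ := w.exists_far_abs_dx hε0
  obtain ⟨B₀, hB₀⟩ := h (ε ^ 2 / (4 * C)) (by positivity)
  set B := max (max R B₀) 1 with hB
  have hB1 : 1 ≤ B := le_max_right _ _
  have hBR : R ≤ B := (le_max_left _ _).trans (le_max_left _ _)
  have hBB : B₀ ≤ B := (le_max_right _ _).trans (le_max_left _ _)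
  have hright : ∀ y, √(2 * F (u B y)) - 3 * ε ≤ pdx u B y := by
    intro y
    have h1 := (hR B y (Or.inl (hBR.trans (le_abs_self _)))).2
    rcases le_total (|u B y|) (1 - ε ^ 2 / (4 * C)) with hu | hu
    · have := hB₀ B y hBB hu
      rw [abs_of_nonneg this] at h1
      linarith
    · have h2 := bd.abs_dx_le w hε0.le hu
      have := neg_abs_le (pdx u B y)
      linarith
  have hleft : ∀ y, pdx u (-B) y ≤ √(2 * F (u (-B) y)) + ε := by
    intro y
    have h1 := (hR (-B) y (Or.inl (by rw [abs_neg]; exact hBR.trans (le_abs_self _)))).1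
    linarith [le_abs_self (pdx u (-B) y)]
  set G : ℝ → ℝ := fun s => √(2 * F s) with hG
  have hGc : Continuous G := Real.continuous_sqrt.comp (continuous_const.mul w.continuous_F)
  set H : ℝ → ℝ := fun s => ∫ t in (-1 : ℝ)..s, G t with hH
  have hHd : ∀ s, HasDerivAt H (G s) s := fun s =>
    intervalIntegral.integral_hasDerivAt_right (hGc.intervalIntegrable _ _)
      (hGc.stronglyMeasurableAtFilter _ _) hGc.continuousAt
  have hHm : Monotone H := monotone_of_deriv_nonneg (fun s => (hHd s).differentiableAt)
    (fun s => by rw [(hHd s).deriv]; exact Real.sqrt_nonneg _)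
  have hHc : Continuous H := continuous_iff_continuousAt.2 fun s => (hHd s).continuousAt
  have hflux : ∀ x p q, ∫ y in p..q, G (u x y) * pdy u x y = H (u x q) - H (u x p) := by
    intro x p q
    refine intervalIntegral.integral_eq_sub_of_hasDerivAt
      (fun y _ => (hHd (u x y)).comp y (w.hasDerivAt_y x y)) ?_
    exact ((hGc.comp (continuous_slice_y w.continuous x)).mul
      (continuous_slice_y w.smooth_pdy.continuous x)).intervalIntegrable _ _
  obtain ⟨e1, e2⟩ := w.eventually_integral_energy_le (-B) B hε0
  have e3 : ∀ᶠ y in atTop, H 1 - ε < H (u B y) :=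
    (((hHc.tendsto 1).comp (w.tendsto_atTop B)).eventually_const_lt (by linarith))
  have e4 : ∀ᶠ y in atBot, H (u B y) < H (-1) + ε :=
    (((hHc.tendsto (-1)).comp (w.tendsto_atBot B)).eventually_lt_const (by linarith))
  obtain ⟨q, q1, q2, q3⟩ := (e1.and (e3.and (eventually_ge_atTop 1))).exists
  obtain ⟨p, p1, p2, p3⟩ := (e2.and (e4.and (eventually_le_atBot 0))).exists
  have hpq : p ≤ q := by linarith
  have hid := w.energy_identity (-B) B p q
  have hmono : I ≤ ∫ x in (-B)..B, ∫ y in p..q, pdy u x y ^ 2 := by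
    have hc : Continuous (fun p : ℝ × ℝ => pdy u p.1 p.2 ^ 2) := w.smooth_pdy.continuous.pow 2
    refine le_trans ?_ (w.integral_sq_mono (p := 0) (q := 1) (by linarith) p3 zero_le_one q3)
    refine intervalIntegral.integral_mono_interval (by linarith) zero_le_one hB1
      (Eventually.of_forall fun x => ?_)
      ((intervalIntegral.continuous_parametric_intervalIntegral_of_continuous' hc
        0 1).intervalIntegrable _ _)
    exact intervalIntegral.integral_nonneg zero_le_one fun y _ => sq_nonneg _
  have hcy := fun x => continuous_slice_y w.smooth_pdy.continuous x
  have hcx := fun x => continuous_slice_y w.smooth_pdx.continuous x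
  have hGy : ∀ x, Continuous fun y => G (u x y) * pdy u x y := fun x =>
    (hGc.comp (continuous_slice_y w.continuous x)).mul (hcy x)
  have hky : ∀ k x, Continuous fun y => k * pdy u x y := fun k x => continuous_const.mul (hcy x)
  have hb : H (u B q) - H (u B p) - 3 * ε * (u B q - u B p) ≤
      ∫ y in p..q, pdx u B y * pdy u B y := by
    rw [← hflux, ← w.integral_pdy, ← intervalIntegral.integral_const_mul,
      ← intervalIntegral.integral_sub ((hGy B).intervalIntegrable _ _)
        ((hky _ B).intervalIntegrable _ _)]
    refine intervalIntegral.integral_mono_on hpq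
      (((hGy B).sub (hky _ B)).intervalIntegrable _ _)
      (((hcx B).mul (hcy B)).intervalIntegrable _ _) fun y _ => ?_
    rw [← sub_mul]
    exact mul_le_mul_of_nonneg_right (hright y) (w.pdy_pos B y).le
  have ha : ∫ y in p..q, pdx u (-B) y * pdy u (-B) y ≤
      H (u (-B) q) - H (u (-B) p) + ε * (u (-B) q - u (-B) p) := by
    rw [← hflux, ← w.integral_pdy, ← intervalIntegral.integral_const_mul,
      ← intervalIntegral.integral_add ((hGy (-B)).intervalIntegrable _ _)
        ((hky _ (-B)).intervalIntegrable _ _)]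
    refine intervalIntegral.integral_mono_on hpq
      (((hcx (-B)).mul (hcy (-B))).intervalIntegrable _ _)
      (((hGy (-B)).add (hky _ (-B))).intervalIntegrable _ _)
      fun y _ => ?_
    rw [← add_mul]
    exact mul_le_mul_of_nonneg_right (hleft y) (w.pdy_pos (-B) y).le
  have m1 : H (u (-B) q) ≤ H 1 := hHm (w.lt_one _ _).le
  have m2 : H (-1) ≤ H (u (-B) p) := hHm (w.neg_one_lt _ _).le
  have m3 : ε * (u (-B) q - u (-B) p) ≤ ε * 2 := by
    gcongr
    linarith [w.lt_one (-B) q, w.neg_one_lt (-B) p]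
  have m4 : 3 * ε * (u B q - u B p) ≤ 3 * ε * 2 := by
    gcongr
    linarith [w.lt_one B q, w.neg_one_lt B p]
  have m5 := mul_le_mul_of_nonneg_left hmono w.speed.le
  have q1' := abs_le.1 q1
  have p1' := abs_le.1 p1
  linarith

/-- Far to the right, the wave decreases in `x` away from the wells. -/
theorem band_neg (w : Wave F c u) {δ : ℝ} (hδ : 0 < δ) :
    ∃ κ > 0, ∃ B, ∀ x y, B ≤ x → |u x y| ≤ 1 - δ → pdx u x y ≤ -κ := by
  obtain ⟨κ, hκ, B, h | h⟩ := w.band_sign hδ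
  · rcases lt_or_ge 1 δ with h1 | h1
    · exact ⟨κ, hκ, B, fun x y _ hu => by linarith [abs_nonneg (u x y)]⟩
    exfalso
    refine w.not_increasing_at_infinity fun δ' hδ' => ?_
    obtain ⟨κ', hκ', B', h' | h'⟩ := w.band_sign hδ'
    · exact ⟨B', fun x y hx hu => hκ'.le.trans (h' x y hx hu)⟩
    · rcases lt_or_ge 1 δ' with h2 | h2
      · exact ⟨B', fun x y _ hu => by linarith [abs_nonneg (u x y)]⟩
      obtain ⟨y, hy⟩ := w.exists_zero (max B B')
      have k1 := h (max B B') y (le_max_left _ _) (by rw [hy, abs_zero]; linarith)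
      have k2 := h' (max B B') y (le_max_right _ _) (by rw [hy, abs_zero]; linarith)
      linarith
  · exact ⟨κ, hκ, B, h⟩

end Wave

namespace Wave

variable {F : ℝ → ℝ} {c : ℝ} {u : ℝ → ℝ → ℝ} {C δ κ B : ℝ}

/-! ### Profiles of horizontal slices -/

/-- Outside the strip `|x| < B`, the slices of `u` are steep away from the wells: decreasing on
the right and increasing on the left. -/
structure Band (u : ℝ → ℝ → ℝ) (δ κ B : ℝ) : Prop where
  kappa_pos : 0 < κ
  nonneg : 0 ≤ B
  right : ∀ x y, B ≤ x → |u x y| ≤ 1 - δ → pdx u x y ≤ -κ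
  left : ∀ x y, x ≤ -B → |u x y| ≤ 1 - δ → κ ≤ pdx u x y

theorem exists_band (w : Wave F c u) (hδ : 0 < δ) : ∃ κ B, Band u δ κ B := by
  obtain ⟨κ₁, hκ₁, B₁, h₁⟩ := w.band_neg hδ
  obtain ⟨κ₂, hκ₂, B₂, h₂⟩ := w.mirror.band_neg hδ
  refine ⟨min κ₁ κ₂, max (max B₁ B₂) 0, lt_min hκ₁ hκ₂, le_max_right _ _, fun x y hx hu => ?_,
    fun x y hx hu => ?_⟩
  · have := h₁ x y (((le_max_left _ _).trans (le_max_left _ _)).trans hx) hu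
    linarith [min_le_left κ₁ κ₂]
  · have h3 : B₂ ≤ -x :=
      ((le_max_right _ _).trans (le_max_left _ _)).trans (show _ ≤ -x by linarith)
    have := h₂ (-x) y h3 (by rwa [neg_neg])
    rw [w.pdx_mirror, neg_neg] at this
    linarith [min_le_right κ₁ κ₂]

theorem Band.mirror (b : Band u δ κ B) (w : Wave F c u) : Band (fun x y => u (-x) y) δ κ B where
  kappa_pos := b.kappa_pos
  nonneg := b.nonneg
  right x y hx hu := by
    rw [w.pdx_mirror]
    linarith [b.left (-x) y (by linarith) hu]
  left x y hx hu := by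
    rw [w.pdx_mirror]
    linarith [b.right (-x) y (by linarith) hu]

theorem Band.stay_le (b : Band u δ κ B) (w : Wave F c u) {x x' y s : ℝ} (hx : B ≤ x)
    (hx' : x ≤ x') (hs : |s| ≤ 1 - δ) (h : u x y ≤ s) : u x' y ≤ s := by
  refine image_le_of_deriv_right_lt_deriv_boundary (f := fun t => u t y)
    (f' := fun t => pdx u t y) (a := x) (b := x') (B := fun _ => s) (B' := fun _ => 0)
    (continuous_slice_x w.continuous y).continuousOn
    (fun t _ => (w.hasDerivAt_x t y).hasDerivWithinAt) h (fun t => hasDerivAt_const t s)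
    (fun t ht e => ?_) ⟨hx', le_rfl⟩
  have e' : u t y = s := e
  have := b.right t y (hx.trans ht.1) (by rwa [e'])
  linarith [b.kappa_pos]

theorem Band.stay_lt (b : Band u δ κ B) (w : Wave F c u) {x x' y s : ℝ} (hx : B ≤ x)
    (hx' : x ≤ x') (hs : |s| ≤ 1 - δ) (h : u x y < s) : u x' y < s := by
  refine lt_of_le_of_ne (b.stay_le w hx hx' hs h.le) fun e => ?_
  have hlt : x < x' := lt_of_le_of_ne hx' fun e' => by
    rw [e'] at h
    exact h.ne e
  have hmax : IsLocalMax (fun t => u t y) x' := by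
    filter_upwards [lt_mem_nhds hlt] with t ht
    rw [e]
    exact b.stay_le w hx ht.le hs h.le
  have h0 := hmax.hasDerivAt_eq_zero (w.hasDerivAt_x x' y)
  have := b.right x' y (hx.trans hx') (by rwa [e])
  linarith [b.kappa_pos]

/-- Right of the strip, slices cross the range between the wells only downwards, and steeply. -/
theorem Band.le_sub (b : Band u δ κ B) (w : Wave F c u) (hδ : δ ≤ 1) {a x y : ℝ} (ha : B ≤ a)
    (hax : a ≤ x) (h1 : -1 + δ ≤ u x y) (h2 : u a y ≤ 1 - δ) :
    u x y ≤ u a y - κ * (x - a) := by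
  have hband : ∀ t ∈ Set.Icc a x, |u t y| ≤ 1 - δ := by
    intro t ht
    refine abs_le.2 ⟨?_, b.stay_le w ha ht.1 (abs_le.2 ⟨by linarith, le_rfl⟩) h2⟩
    by_contra hlt
    have := b.stay_lt w (ha.trans ht.1) ht.2 (s := -1 + δ) (abs_le.2 ⟨by linarith, by linarith⟩)
      (by linarith)
    linarith
  refine image_le_of_deriv_right_le_deriv_boundary (f := fun t => u t y)
    (f' := fun t => pdx u t y) (a := a) (b := x) (B := fun t => u a y - κ * (t - a))
    (B' := fun _ => -κ) (continuous_slice_x w.continuous y).continuousOn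
    (fun t _ => (w.hasDerivAt_x t y).hasDerivWithinAt) (by simp) (by fun_prop) (fun t _ => ?_)
    (fun t ht => b.right t y (ha.trans ht.1) (hband t ⟨ht.1, ht.2.le⟩)) ⟨hax, le_rfl⟩
  exact (((((hasDerivAt_id t).sub_const a).const_mul κ).const_sub (u a y)).congr_deriv
    (by simp)).hasDerivWithinAt

theorem Band.le_sub_left (b : Band u δ κ B) (w : Wave F c u) (hδ : δ ≤ 1) {a x y : ℝ}
    (ha : a ≤ -B) (hax : x ≤ a) (h1 : -1 + δ ≤ u x y) (h2 : u a y ≤ 1 - δ) :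
    u x y ≤ u a y - κ * (a - x) := by
  have := (b.mirror w).le_sub w.mirror hδ (a := -a) (x := -x) (y := y) (by linarith) (by linarith)
    (by simpa using h1) (by simpa using h2)
  simp only [neg_neg] at this
  linarith

theorem exists_low (w : Wave F c u) (R : ℝ) (hδ : 0 < δ) :
    ∃ Y, ∀ x y, |x| ≤ R → y ≤ Y → u x y < -1 + δ := by
  obtain ⟨Y, hY⟩ := (isCompact_Icc (a := -R) (b := R)).elim_directed_cover
    (fun Y : ℝ => {x | u x Y < -1 + δ})
    (fun Y => isOpen_lt (continuous_slice_x w.continuous Y) continuous_const)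
    (fun x _ => by
      obtain ⟨Y, hY⟩ := ((w.tendsto_atBot x).eventually_lt_const
        (show -1 < -1 + δ by linarith)).exists
      exact Set.mem_iUnion.2 ⟨Y, hY⟩)
    (fun a b => ⟨min a b,
      fun x hx => ((w.strictMono x).monotone (min_le_left a b)).trans_lt hx,
      fun x hx => ((w.strictMono x).monotone (min_le_right a b)).trans_lt hx⟩)
  exact ⟨Y, fun x y hx hy => ((w.strictMono x).monotone hy).trans_lt (hY (abs_le.1 hx))⟩

theorem exists_high (w : Wave F c u) (R : ℝ) (hδ : 0 < δ) :
    ∃ Y, ∀ x y, |x| ≤ R → Y ≤ y → 1 - δ < u x y := by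
  obtain ⟨Y, hY⟩ := (isCompact_Icc (a := -R) (b := R)).elim_directed_cover
    (fun Y : ℝ => {x | 1 - δ < u x Y})
    (fun Y => isOpen_lt continuous_const (continuous_slice_x w.continuous Y))
    (fun x _ => by
      obtain ⟨Y, hY⟩ := ((w.tendsto_atTop x).eventually_const_lt
        (show 1 - δ < 1 by linarith)).exists
      exact Set.mem_iUnion.2 ⟨Y, hY⟩)
    (fun a b => ⟨max a b,
      fun x hx => lt_of_lt_of_le hx ((w.strictMono x).monotone (le_max_left a b)),
      fun x hx => lt_of_lt_of_le hx ((w.strictMono x).monotone (le_max_right a b))⟩)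
  exact ⟨Y, fun x y hx hy => lt_of_lt_of_le (hY (abs_le.1 hx)) ((w.strictMono x).monotone hy)⟩

/-- Slices tend to `-1` on the right. -/
theorem exists_right_low (w : Wave F c u) (y : ℝ) (hδ : 0 < δ) :
    ∃ X, ∀ x, X ≤ x → u x y < -1 + δ := by
  set d := min 1 (δ / 3) with hd
  have hd0 : 0 < d := by positivity
  have hd1 : d ≤ 1 := min_le_left _ _
  have hd3 : d ≤ δ / 3 := min_le_right _ _
  obtain ⟨κ, B, b⟩ := w.exists_band hd0
  obtain ⟨y₁, h1, h2⟩ := (((w.tendsto_atBot B).eventually_le_const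
    (show -1 < -1 + d by linarith)).and (eventually_lt_atBot y)).exists
  have hy : 0 < y - y₁ := by linarith
  obtain ⟨R, hR⟩ := w.exists_far_pdy_le (show 0 < d / (y - y₁) by positivity)
  refine ⟨max B R, fun x hx => ?_⟩
  have h3 := b.stay_le w le_rfl ((le_max_left _ _).trans hx)
    (s := -1 + d) (abs_le.2 ⟨by linarith, by linarith⟩) h1
  have h4 := abs_sub_le_of_hasDerivAt (a := y₁) (b := y) (C := d / (y - y₁))
    (fun t => w.hasDerivAt_y x t) (fun t _ => by
      rw [abs_of_pos (w.pdy_pos x t)]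
      exact hR x t (Or.inl (((le_max_right _ _).trans hx).trans (le_abs_self x))))
  rw [abs_of_pos hy, div_mul_cancel₀ _ hy.ne'] at h4
  linarith [(abs_le.1 h4).2]

/-- `u` tends to `-1` uniformly in `x` as `y → -∞`. -/
theorem exists_uniform_low (w : Wave F c u) (hδ : 0 < δ) :
    ∃ Y, ∀ x y, y ≤ Y → u x y < -1 + δ := by
  set d := min 1 δ with hd
  have hd0 : 0 < d := by positivity
  have hd1 : d ≤ 1 := min_le_left _ _
  have hd3 : d ≤ δ := min_le_right _ _
  obtain ⟨κ, B, b⟩ := w.exists_band hd0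
  have hB := b.nonneg
  obtain ⟨Y, hY⟩ := w.exists_low B hd0
  refine ⟨Y, fun x y hy => lt_of_lt_of_le ?_ (show -1 + d ≤ -1 + δ by linarith)⟩
  have hs : |-1 + d| ≤ 1 - d := abs_le.2 ⟨by linarith, by linarith⟩
  rcases le_total B x with hx | hx
  · exact b.stay_lt w le_rfl hx hs (hY B y (by rw [abs_of_nonneg hB]) hy)
  rcases le_total (-B) x with hx' | hx'
  · exact hY x y (abs_le.2 ⟨hx', hx⟩) hy
  · have := (b.mirror w).stay_lt w.mirror (x := B) (x' := -x) (y := y) le_rfl (by linarith) hs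
      (hY (-B) y (by rw [abs_neg, abs_of_nonneg hB]) hy)
    simpa using this

/-- Far out, a point lying left of a point with a larger value has nearly nonnegative slope, and a
definite positive slope away from the wells. -/
theorem exists_far_sign (w : Wave F c u) (hδ : 0 < δ) :
    ∃ κ > 0, ∀ η > 0, ∃ R, ∀ X Y x, Far R X Y → X < x → u X Y ≤ u x Y →
      -η ≤ pdx u X Y ∧ (|u X Y| ≤ 1 - δ → κ ≤ pdx u X Y) := by
  obtain ⟨C, bd⟩ := w.exists_bound
  have hC := bd.pos
  obtain ⟨κ, hκ, R₁, hR₁⟩ := w.exists_far_band hδ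
  refine ⟨κ, hκ, fun η hη => ?_⟩
  set d := min 1 (min δ (η ^ 2 / (4 * C))) with hd
  have hd0 : 0 < d := by positivity
  have hd1 : d ≤ 1 := min_le_left _ _
  have hd2 : d ≤ δ := (min_le_right _ _).trans (min_le_left _ _)
  have hd3 : d ≤ η ^ 2 / (4 * C) := (min_le_right _ _).trans (min_le_right _ _)
  obtain ⟨κ', B, b⟩ := w.exists_band hd0
  obtain ⟨Y₁, hY₁⟩ := w.exists_low B hd0
  obtain ⟨Y₂, hY₂⟩ := w.exists_high B hd0
  refine ⟨max (max R₁ (B + 1)) (max (-Y₁) Y₂), fun X Y x hfar hx hu => ?_⟩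
  have key : |u X Y| ≤ 1 - d → 0 ≤ pdx u X Y := by
    intro hb
    have hb' := abs_le.1 hb
    rcases le_total B X with hBX | hBX
    · have := b.le_sub w hd1 hBX hx.le (by linarith) hb'.2
      have := mul_pos b.kappa_pos (sub_pos.2 hx)
      linarith
    rcases le_total X (-B) with hBX' | hBX'
    · exact b.kappa_pos.le.trans (b.left X Y hBX' hb)
    have hXB : |X| ≤ B := abs_le.2 ⟨hBX', hBX⟩
    rcases hfar with h | h
    · linarith [(le_max_right R₁ (B + 1)).trans ((le_max_left _ _).trans h)]
    · rcases abs_cases Y with ⟨e, _⟩ | ⟨e, _⟩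
      · linarith [hY₂ X Y hXB (by
          linarith [(le_max_right (-Y₁) Y₂).trans ((le_max_right _ _).trans h)])]
      · linarith [hY₁ X Y hXB (by
          linarith [(le_max_left (-Y₁) Y₂).trans ((le_max_right _ _).trans h)])]
  constructor
  · rcases le_total (|u X Y|) (1 - d) with h | h
    · linarith [key h]
    · exact (abs_le.1 (bd.abs_dx_le w hη.le (by linarith))).1
  · intro h
    have h0 := key (by linarith)
    have h1 := hR₁ X Y (hfar.mono ((le_max_left _ _).trans (le_max_left _ _))) h
    rwa [abs_of_nonneg h0] at h1

end Wave

/-! ### A strong minimum principle along horizontal lines -/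

theorem barrier_inequality {c Λ r β g d E e : ℝ} (hr : 0 < r) (hΛ : 0 ≤ Λ)
    (hβr : β * r = 12 + 4 * |c| * r + Λ * r ^ 2) (hg0 : 0 ≤ g) (hgr : g ≤ r ^ 2) (hEx : 0 < E)
    (hexp : E ≤ e) (hy : |d| ≤ r) (hg : g = r ^ 2 - d ^ 2) :
    Λ * (g ^ 2 * E) < g ^ 2 * (β ^ 2 * e) + E * (8 * d ^ 2 - 4 * g) + c * (E * (-4 * d * g)) := by
  have hcy : c * (-4 * d * g) ≥ -(4 * |c| * r * g) := by
    have h1 : |c * (-4 * d * g)| = 4 * |c| * |d| * g := by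
      rw [abs_mul, abs_mul, abs_mul, abs_of_nonneg hg0]
      norm_num
      ring
    have h2 : 4 * |c| * |d| * g ≤ 4 * |c| * r * g := by gcongr
    have h3 := neg_abs_le (c * (-4 * d * g))
    linarith
  have hΛg : Λ * g ^ 2 ≤ Λ * r ^ 2 * g := by
    have : Λ * g * g ≤ Λ * g * r ^ 2 := by gcongr
    nlinarith
  have hquad : 0 < g ^ 2 * β ^ 2 + 8 * r ^ 2 - g * (12 + 4 * |c| * r + Λ * r ^ 2) := by
    have h1 : g * (12 + 4 * |c| * r + Λ * r ^ 2) = (g * β) * r := by rw [← hβr]; ring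
    rw [h1]
    nlinarith [sq_nonneg (g * β - r / 2), pow_pos hr 2]
  have hbr : 0 < g ^ 2 * β ^ 2 + (8 * d ^ 2 - 4 * g) + c * (-4 * d * g) - Λ * g ^ 2 := by
    have h1 : d ^ 2 = r ^ 2 - g := by rw [hg]; ring
    rw [h1]
    have h2 : g * (12 + 4 * |c| * r + Λ * r ^ 2) =
        12 * g + 4 * |c| * r * g + Λ * r ^ 2 * g := by ring
    rw [h2] at hquad
    linarith
  have h1 := mul_pos hEx hbr
  have h2 : g ^ 2 * β ^ 2 * E ≤ g ^ 2 * β ^ 2 * e := by gcongr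
  linarith [show E * (g ^ 2 * β ^ 2 + (8 * d ^ 2 - 4 * g) + c * (-4 * d * g) - Λ * g ^ 2) =
    g ^ 2 * β ^ 2 * E + E * (8 * d ^ 2 - 4 * g) + c * (E * (-4 * d * g)) - Λ * (g ^ 2 * E) by ring]

/-- Propagation of positivity to the right: a nonnegative `f` with `f_xx + f_yy + c f_y ≤ Λ f` in
a vertical strip that is positive at a point is positive at every point of the strip to its right
on the same horizontal line. -/
theorem pos_of_pos_left {c Λ p q ℓ y₀ : ℝ} {f : ℝ → ℝ → ℝ}
    (hf : Continuous (fun z : ℝ × ℝ => f z.1 z.2)) (hΛ : 0 ≤ Λ)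
    (h0 : ∀ x y, p ≤ x → x ≤ ℓ → 0 ≤ f x y)
    (hL : ∀ x y, p < x → x < ℓ → ∃ l ≤ Λ * f x y, HasL c f x y l)
    (hpq : p < q) (hqℓ : q < ℓ) (hp : 0 < f p y₀) : 0 < f q y₀ := by
  obtain ⟨r, hr, hrf⟩ : ∃ r > 0, ∀ y, |y - y₀| ≤ r → f p y₀ / 2 < f p y := by
    have hc : ContinuousAt (fun y => f p y) y₀ := (continuous_slice_y hf p).continuousAt
    have := hc.eventually (lt_mem_nhds (show f p y₀ / 2 < f p y₀ by linarith))
    obtain ⟨r, hr, h⟩ := Metric.nhds_basis_closedBall.eventually_iff.1 this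
    exact ⟨r, hr, fun y hy => h (by rwa [Metric.mem_closedBall, Real.dist_eq])⟩
  set K := 12 + 4 * |c| * r + Λ * r ^ 2 with hK
  have hK0 : 0 < K := by positivity
  set β := K / r with hβ
  have hβ0 : 0 < β := by positivity
  have hβr : β * r = K := div_mul_cancel₀ _ hr.ne'
  set E : ℝ → ℝ := fun x => Real.exp (-β * (x - p)) - Real.exp (-β * (ℓ - p)) with hE
  set h : ℝ → ℝ := fun y => (r ^ 2 - (y - y₀) ^ 2) ^ 2 with hh
  have hEpos : ∀ x, x < ℓ → 0 < E x := fun x hx => by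
    refine sub_pos.2 (Real.exp_lt_exp.2 ?_)
    nlinarith
  have hEle : ∀ x, p ≤ x → E x ≤ 1 := fun x hx => by
    have h1 : Real.exp (-β * (x - p)) ≤ 1 := Real.exp_le_one_iff.2 (by nlinarith)
    have h2 := Real.exp_pos (-β * (ℓ - p))
    simp only [hE]
    linarith
  have hjE : ∀ x, Jet E x (-β * Real.exp (-β * (x - p))) (β ^ 2 * Real.exp (-β * (x - p))) := by
    intro x
    have hlin : ∀ t, HasDerivAt (fun t => -β * (t - p)) (-β) t := fun t =>
      (((hasDerivAt_id t).sub_const p).const_mul (-β)).congr_deriv (by simp)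
    have hd : ∀ t, HasDerivAt (fun t => Real.exp (-β * (t - p)))
        (-β * Real.exp (-β * (t - p))) t := fun t =>
      ((hlin t).exp).congr_deriv (by ring)
    exact Jet.of_hasDerivAt (d := fun t => -β * Real.exp (-β * (t - p)))
      (fun t => (hd t).sub_const _) (((hd x).const_mul (-β)).congr_deriv (by ring))
  have hjh : ∀ y, Jet h y (-4 * (y - y₀) * (r ^ 2 - (y - y₀) ^ 2))
      (8 * (y - y₀) ^ 2 - 4 * (r ^ 2 - (y - y₀) ^ 2)) := by
    intro y
    have hg : ∀ t, HasDerivAt (fun t => r ^ 2 - (t - y₀) ^ 2) (-2 * (t - y₀)) t := fun t =>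
      ((((hasDerivAt_id t).sub_const y₀).pow 2).const_sub (r ^ 2)).congr_deriv (by simp)
    have hl : ∀ t, HasDerivAt (fun t => -4 * (t - y₀)) (-4) t := fun t =>
      (((hasDerivAt_id t).sub_const y₀).const_mul (-4)).congr_deriv (by simp)
    exact Jet.of_hasDerivAt (d := fun t => -4 * (t - y₀) * (r ^ 2 - (t - y₀) ^ 2))
      (fun t => ((hg t).pow 2).congr_deriv (by norm_num; ring))
      (((hl y).mul (hg y)).congr_deriv (by ring))
  set ε := f p y₀ / (2 * r ^ 4) with hε
  have hε0 : 0 < ε := by positivity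
  have hεr : ε * r ^ 4 = f p y₀ / 2 := by rw [hε]; field_simp
  have hcont : Continuous (fun z : ℝ × ℝ => f z.1 z.2 - ε * (h z.2 * E z.1)) := by
    simp only [hh, hE]
    fun_prop
  have key := nonneg_on_compact (c := c) (D := Set.Icc p ℓ ×ˢ Set.Icc (y₀ - r) (y₀ + r))
    (f := fun x y => f x y - ε * (h y * E x)) (isCompact_Icc.prod isCompact_Icc)
    hcont.continuousOn ?_ q y₀
    ⟨⟨hpq.le, hqℓ.le⟩, by constructor <;> linarith⟩
  · have h1 : 0 < h y₀ := by simp only [hh]; simp; positivity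
    have h2 := mul_pos hε0 (mul_pos h1 (hEpos q hqℓ))
    linarith
  intro x y hxy hneg
  obtain ⟨⟨hx1, hx2⟩, hy1, hy2⟩ := hxy
  have hy : |y - y₀| ≤ r := abs_le.2 ⟨by linarith, by linarith⟩
  have hf0 := h0 x y hx1 hx2
  have hprod : 0 < h y * E x := by
    by_contra hle
    nlinarith
  have hsq : (y - y₀) ^ 2 ≤ r ^ 2 := by
    rw [← sq_abs]
    gcongr
  have hxp : p < x := by
    refine lt_of_le_of_ne hx1 fun e => ?_
    subst e
    have h1 := hrf y hy
    have h2 : h y ≤ r ^ 4 := by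
      simp only [hh]
      rw [show r ^ 4 = (r ^ 2) ^ 2 by ring]
      gcongr
      nlinarith [sq_nonneg (y - y₀)]
    have h3 := hEle p le_rfl
    have h4 : h y * E p ≤ r ^ 4 * 1 := by
      refine mul_le_mul h2 h3 (hEpos p (by linarith)).le (by positivity)
    nlinarith
  have hxℓ : x < ℓ := by
    refine lt_of_le_of_ne hx2 fun e => ?_
    rw [e] at hprod
    simp [hE] at hprod
  have hyr : |y - y₀| < r := by
    refine lt_of_le_of_ne hy fun e => ?_
    have : h y = 0 := by
      simp only [hh]
      rw [← sq_abs (y - y₀), e]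
      ring
    rw [this, zero_mul] at hprod
    exact lt_irrefl _ hprod
  have hyr' := abs_lt.1 hyr
  refine ⟨prod_mem_nhds (Icc_mem_nhds hxp hxℓ) (Icc_mem_nhds (by linarith) (by linarith)), ?_⟩
  obtain ⟨l, hl, hfl⟩ := hL x y hxp hxℓ
  have hψ : HasL c (fun x y => h y * E x) x y
      (h y * (β ^ 2 * Real.exp (-β * (x - p))) +
        E x * (8 * (y - y₀) ^ 2 - 4 * (r ^ 2 - (y - y₀) ^ 2)) +
        c * (E x * (-4 * (y - y₀) * (r ^ 2 - (y - y₀) ^ 2)))) := by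
    refine ⟨_, _, _, _, (hjE x).const_mul (h y), ?_, rfl⟩
    simpa only [mul_comm] using (hjh y).const_mul (E x)
  refine ⟨_, ?_, hfl.sub (hψ.const_mul ε)⟩
  set g := r ^ 2 - (y - y₀) ^ 2 with hg
  have hhg : h y = g ^ 2 := rfl
  have hg0 : 0 ≤ g := by linarith
  have hgr : g ≤ r ^ 2 := by linarith [sq_nonneg (y - y₀)]
  have hEx := hEpos x hxℓ
  have hexp : E x ≤ Real.exp (-β * (x - p)) := by
    simp only [hE]
    linarith [Real.exp_pos (-β * (ℓ - p))]
  have hmain := barrier_inequality (c := c) hr hΛ hβr hg0 hgr hEx hexp hy hg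
  rw [hhg] at hneg ⊢
  have h1 := mul_lt_mul_of_pos_left hmain hε0
  have h2 : Λ * (f x y - ε * (g ^ 2 * E x)) ≤ 0 := mul_nonpos_of_nonneg_of_nonpos hΛ hneg.le
  linarith

/-- Propagation of positivity to the left. -/
theorem pos_of_pos_right {c Λ p q ℓ y₀ : ℝ} {f : ℝ → ℝ → ℝ}
    (hf : Continuous (fun z : ℝ × ℝ => f z.1 z.2)) (hΛ : 0 ≤ Λ)
    (h0 : ∀ x y, ℓ ≤ x → x ≤ p → 0 ≤ f x y)
    (hL : ∀ x y, ℓ < x → x < p → ∃ l ≤ Λ * f x y, HasL c f x y l)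
    (hℓq : ℓ < q) (hqp : q < p) (hp : 0 < f p y₀) : 0 < f q y₀ := by
  have := pos_of_pos_left (c := c) (Λ := Λ) (p := -p) (q := -q) (ℓ := -ℓ) (y₀ := y₀)
    (f := fun x y => f (0 - x) (y + 0)) ?_ hΛ (fun x y h1 h2 => h0 _ _ (by linarith) (by linarith))
    (fun x y h1 h2 => ?_) (by linarith) (by linarith) (by simpa using hp)
  · simpa using this
  · exact hf.comp (by fun_prop : Continuous fun z : ℝ × ℝ => (0 - z.1, z.2 + 0))
  · obtain ⟨l, hl, hl'⟩ := hL (0 - x) (y + 0) (by linarith) (by linarith)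
    exact ⟨l, hl, hl'.reflect 0 0⟩

/-! ### The sliding method -/

/-- A continuous one-parameter family that is eventually positive on a compact set `K` stays
nonnegative on `D` as the parameter decreases, provided that nonnegativity passes from `K` to `D`
and that no contact occurs in `K`. -/
theorem sliding {α : Type*} [TopologicalSpace α] {g : ℝ → α → ℝ} {K D : Set α} {T : ℝ}
    (hK : IsCompact K) (hg : Continuous (fun z : ℝ × α => g z.1 z.2))
    (hT : ∀ τ, T ≤ τ → ∀ q ∈ K, 0 < g τ q)
    (hD : ∀ τ > 0, (∀ q ∈ K, 0 ≤ g τ q) → ∀ q ∈ D, 0 ≤ g τ q)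
    (hS : ∀ τ > 0, (∀ q ∈ D, 0 ≤ g τ q) → ∀ q ∈ K, g τ q ≠ 0) :
    ∀ q ∈ D, 0 ≤ g 0 q := by
  have hcq : ∀ q, Continuous (fun τ => g τ q) := fun q =>
    hg.comp (by fun_prop : Continuous fun τ : ℝ => (τ, q))
  have key : ∀ τ > 0, ∀ q ∈ K, 0 ≤ g τ q := by
    intro τ₁ hτ₁ q₁ hq₁
    by_contra hneg
    push Not at hneg
    set A : Set (ℝ × α) := (Set.Icc τ₁ T ×ˢ K) ∩ {z | g z.1 z.2 ≤ 0} with hA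
    have hAc : IsCompact A := (isCompact_Icc.prod hK).inter_right (isClosed_le hg continuous_const)
    have hτT : ∀ τ, ∀ q ∈ K, g τ q ≤ 0 → τ ≤ T := fun τ q hq h => by
      by_contra hlt
      push Not at hlt
      linarith [hT τ hlt.le q hq]
    obtain ⟨⟨τ₂, q₂⟩, hz, hmax⟩ := hAc.exists_isMaxOn
      ⟨(τ₁, q₁), ⟨⟨le_rfl, hτT τ₁ q₁ hq₁ hneg.le⟩, hq₁⟩, hneg.le⟩ continuous_fst.continuousOn
    have hτ₂ : 0 < τ₂ := hτ₁.trans_le hz.1.1.1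
    have hKpos : ∀ q ∈ K, 0 ≤ g τ₂ q := by
      intro q hq
      by_contra hlt
      push Not at hlt
      have e1 : ∀ᶠ τ in nhdsWithin τ₂ (Set.Ioi τ₂), g τ q < 0 :=
        ((hcq q).tendsto τ₂).eventually (gt_mem_nhds hlt) |>.filter_mono nhdsWithin_le_nhds
      obtain ⟨τ, h1, h2⟩ := (e1.and self_mem_nhdsWithin).exists
      have h2' : τ₂ < τ := h2
      have h3 : τ ≤ τ₂ := hmax (show (τ, q) ∈ A from
        ⟨⟨⟨hz.1.1.1.trans h2'.le, hτT τ q hq h1.le⟩, hq⟩, h1.le⟩)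
      linarith
    have hq₂ : q₂ ∈ K := hz.1.2
    exact hS τ₂ hτ₂ (hD τ₂ hτ₂ hKpos) q₂ hq₂ (le_antisymm hz.2 (hKpos q₂ hq₂))
  intro q hq
  have hlim : Tendsto (fun τ => g τ q) (nhdsWithin 0 (Set.Ioi 0)) (nhds (g 0 q)) :=
    ((hcq q).tendsto 0).mono_left nhdsWithin_le_nhds
  refine ge_of_tendsto hlim ?_
  filter_upwards [self_mem_nhdsWithin] with τ hτ
  exact hD τ hτ (key τ hτ) q hq

namespace Wave

variable {F : ℝ → ℝ} {c : ℝ} {u : ℝ → ℝ → ℝ} {C δ μ : ℝ}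

theorem hasL_self (w : Wave F c u) (x y : ℝ) : HasL c u x y (deriv F (u x y)) := by
  rw [← w.pde]
  exact hasL_of_contDiff w.smooth_two x y

theorem hasL_reflect_sub (w : Wave F c u) (s t x y : ℝ) :
    HasL c (fun x y => u (s - x) (y + t) - u x y) x y
      (deriv F (u (s - x) (y + t)) - deriv F (u x y)) :=
  ((w.hasL_self _ _).reflect s t).sub (w.hasL_self x y)

theorem Bound.abs_F'_sub_le (b : Bound F u C) (w : Wave F c u) {r s : ℝ}
    (hr : r ∈ Set.Icc (-1 : ℝ) 1) (hs : s ∈ Set.Icc (-1 : ℝ) 1) :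
    |deriv F s - deriv F r| ≤ C * |s - r| :=
  abs_sub_le_of_hasDerivAt (fun t => w.hasDerivAt_F' t) fun t ht =>
    b.well'' t (Set.uIcc_subset_Icc hr hs ht)

theorem continuous_reflect (w : Wave F c u) (s t : ℝ) :
    Continuous (fun z : ℝ × ℝ => u (s - z.1) (z.2 + t) - u z.1 z.2) :=
  (w.continuous.comp (by fun_prop : Continuous fun z : ℝ × ℝ => (s - z.1, z.2 + t))).sub
    w.continuous

theorem reflect_lt_right (w : Wave F c u) {l τ p q y : ℝ}
    (h : ∀ x y, l ≤ x → u x y ≤ u (2 * l - x) (y + τ)) (hp : l ≤ p) (hpq : p < q)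
    (hlt : u p y < u (2 * l - p) (y + τ)) : u q y < u (2 * l - q) (y + τ) := by
  obtain ⟨C, bd⟩ := w.exists_bound
  refine sub_pos.1 (pos_of_pos_left (c := c) (p := p) (q := q) (ℓ := q + 1) (y₀ := y)
    (f := fun x y => u (2 * l - x) (y + τ) - u x y) (w.continuous_reflect (2 * l) τ)
    bd.pos.le (fun x y h1 _ => sub_nonneg.2 (h x y (hp.trans h1))) (fun x y h1 _ =>
      ⟨_, ?_, w.hasL_reflect_sub (2 * l) τ x y⟩) hpq (by linarith) (sub_pos.2 hlt))
  have := bd.abs_F'_sub_le w (w.mem_Icc x y) (w.mem_Icc (2 * l - x) (y + τ))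
  rw [abs_of_nonneg (sub_nonneg.2 (h x y (hp.trans h1.le)))] at this
  exact (le_abs_self _).trans this

theorem reflect_lt_left (w : Wave F c u) {l τ p q y : ℝ}
    (h : ∀ x y, l ≤ x → u x y ≤ u (2 * l - x) (y + τ)) (hq : l < q) (hqp : q < p)
    (hlt : u p y < u (2 * l - p) (y + τ)) : u q y < u (2 * l - q) (y + τ) := by
  obtain ⟨C, bd⟩ := w.exists_bound
  refine sub_pos.1 (pos_of_pos_right (c := c) (p := p) (q := q) (ℓ := l) (y₀ := y)
    (f := fun x y => u (2 * l - x) (y + τ) - u x y) (w.continuous_reflect (2 * l) τ)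
    bd.pos.le (fun x y h1 _ => sub_nonneg.2 (h x y h1)) (fun x y h1 _ =>
      ⟨_, ?_, w.hasL_reflect_sub (2 * l) τ x y⟩) hq hqp (sub_pos.2 hlt))
  have := bd.abs_F'_sub_le w (w.mem_Icc x y) (w.mem_Icc (2 * l - x) (y + τ))
  rw [abs_of_nonneg (sub_nonneg.2 (h x y h1.le))] at this
  exact (le_abs_self _).trans this

/-- `F` is `μ`-uniformly convex within distance `2 δ` of the wells. -/
structure Convexity (F : ℝ → ℝ) (δ μ : ℝ) : Prop where
  delta_pos : 0 < δ
  delta_le : δ ≤ 1 / 4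
  mu_pos : 0 < μ
  le : ∀ s, 1 - 2 * δ ≤ |s| → |s| ≤ 1 → μ ≤ deriv (deriv F) s

theorem exists_convexity (w : Wave F c u) : ∃ δ μ, Convexity F δ μ := by
  have hm : 0 < deriv (deriv F) (-1) := w.well.2.2.2.1
  have hp : 0 < deriv (deriv F) 1 := w.well.2.2.2.2.1
  have e1 := w.continuous_F''.continuousAt.eventually
    (lt_mem_nhds (show deriv (deriv F) (-1) / 2 < deriv (deriv F) (-1) by linarith))
  have e2 := w.continuous_F''.continuousAt.eventually
    (lt_mem_nhds (show deriv (deriv F) 1 / 2 < deriv (deriv F) 1 by linarith))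
  obtain ⟨r1, hr1, h1⟩ := Metric.nhds_basis_closedBall.eventually_iff.1 e1
  obtain ⟨r2, hr2, h2⟩ := Metric.nhds_basis_closedBall.eventually_iff.1 e2
  refine ⟨min (1 / 4) (min (r1 / 2) (r2 / 2)),
    min (deriv (deriv F) (-1) / 2) (deriv (deriv F) 1 / 2), by positivity, min_le_left _ _,
    by positivity, fun s hs hs' => ?_⟩
  have k1 : min (1 / 4) (min (r1 / 2) (r2 / 2)) ≤ r1 / 2 :=
    (min_le_right _ _).trans (min_le_left _ _)
  have k2 : min (1 / 4) (min (r1 / 2) (r2 / 2)) ≤ r2 / 2 :=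
    (min_le_right _ _).trans (min_le_right _ _)
  rcases abs_cases s with ⟨e, _⟩ | ⟨e, _⟩
  · refine (min_le_right _ _).trans (h2 ?_).le
    rw [Metric.mem_closedBall, Real.dist_eq]
    exact abs_le.2 ⟨by linarith, by linarith⟩
  · refine (min_le_left _ _).trans (h1 ?_).le
    rw [Metric.mem_closedBall, Real.dist_eq]
    exact abs_le.2 ⟨by linarith, by linarith⟩

theorem Convexity.mul_sub_le (k : Convexity F δ μ) (w : Wave F c u) {r s : ℝ} (hrs : r ≤ s)
    (h : -1 ≤ r ∧ s ≤ -1 + 2 * δ ∨ 1 - 2 * δ ≤ r ∧ s ≤ 1) :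
    μ * (s - r) ≤ deriv F s - deriv F r := by
  have hd := k.delta_pos
  have hd' := k.delta_le
  refine (convex_Icc r s).mul_sub_le_image_sub_of_le_deriv w.continuous_F'.continuousOn
    (fun t _ => (w.hasDerivAt_F' t).differentiableAt.differentiableWithinAt) (fun t ht => ?_)
    r ⟨le_rfl, hrs⟩ s ⟨hrs, le_rfl⟩ hrs
  have ht' := interior_subset ht
  rcases h with ⟨h1, h2⟩ | ⟨h1, h2⟩
  · have e : |t| = -t := abs_of_nonpos (by linarith [ht'.2])
    exact k.le t (by rw [e]; linarith [ht'.2]) (by rw [e]; linarith [ht'.1])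
  · have e : |t| = t := abs_of_nonneg (by linarith [ht'.1])
    exact k.le t (by rw [e]; linarith [ht'.1]) (by rw [e]; linarith [ht'.2])

theorem isCompact_upper (w : Wave F c u) (hδ : 0 < δ) (l Y : ℝ) :
    IsCompact {q : ℝ × ℝ | l ≤ q.1 ∧ q.2 ≤ Y ∧ -1 + δ ≤ u q.1 q.2} := by
  obtain ⟨Y₁, hY₁⟩ := w.exists_uniform_low hδ
  obtain ⟨X, hX⟩ := w.exists_right_low Y hδ
  refine (isCompact_Icc.prod isCompact_Icc).of_isClosed_subset
    (s := Set.Icc l X ×ˢ Set.Icc Y₁ Y) ?_ ?_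
  · exact (isClosed_le continuous_const continuous_fst).inter
      ((isClosed_le continuous_snd continuous_const).inter
        (isClosed_le continuous_const w.continuous))
  · rintro ⟨x, y⟩ ⟨h1, h2, h3⟩
    refine ⟨⟨h1, ?_⟩, ?_, h2⟩
    · by_contra hlt
      push Not at hlt
      have := hX x hlt.le
      have := (w.strictMono x).monotone h2
      simp only at *
      linarith
    · by_contra hlt
      push Not at hlt
      have := hY₁ x y hlt.le
      simp only at *
      linarith

theorem exists_shift_lt (w : Wave F c u) {K : Set (ℝ × ℝ)} (hK : IsCompact K) {X : ℝ × ℝ → ℝ}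
    (hX : Continuous X) : ∃ T, ∀ τ, T ≤ τ → ∀ q ∈ K, u q.1 q.2 < u (X q) (q.2 + τ) := by
  rcases K.eq_empty_or_nonempty with rfl | hne
  · exact ⟨0, fun _ _ q hq => absurd hq (Set.notMem_empty q)⟩
  obtain ⟨q₀, hq₀, hmax⟩ := hK.exists_isMaxOn hne w.continuous.continuousOn
  obtain ⟨R, hR⟩ := hK.exists_bound_of_continuousOn hX.continuousOn
  obtain ⟨R', hR'⟩ := hK.exists_bound_of_continuousOn (f := Prod.snd) continuous_snd.continuousOn
  obtain ⟨Y, hY⟩ := w.exists_high R (sub_pos.2 (w.lt_one q₀.1 q₀.2))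
  refine ⟨Y + R', fun τ hτ q hq => ?_⟩
  have h1 : u q.1 q.2 ≤ u q₀.1 q₀.2 := hmax hq
  have h2 := hR q hq
  have h3 := hR' q hq
  rw [Real.norm_eq_abs] at h2 h3
  have := hY (X q) (q.2 + τ) h2 (by linarith [(abs_le.1 h3).1])
  linarith

/-- If for large `y` the reflected slice lies above the original one except possibly near the
wells, then it lies above everywhere. -/
theorem reflect_le_of_eventually (w : Wave F c u) (k : Convexity F δ μ) {l Y : ℝ}
    (h : ∀ x y, Y ≤ y → l < x → u (2 * l - x) y < u x y → u (2 * l - x) y ≤ 1 - δ →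
      u x y < -1 + δ) :
    ∀ x y, l ≤ x → u x y ≤ u (2 * l - x) y := by
  have hδ := k.delta_pos
  have hδ' := k.delta_le
  set K := {q : ℝ × ℝ | l ≤ q.1 ∧ q.2 ≤ Y ∧ -1 + δ ≤ u q.1 q.2} with hKdef
  have hK : IsCompact K := w.isCompact_upper hδ l Y
  obtain ⟨T, hT⟩ := w.exists_shift_lt hK (X := fun q => 2 * l - q.1) (by fun_prop)
  have hside : ∀ τ > 0, ∀ x y, x = l → 0 < u (2 * l - x) (y + τ) - u x y := by
    intro τ hτ x y hx
    rw [hx, show 2 * l - l = l by ring]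
    exact sub_pos.2 (w.strictMono l (by linarith))
  have main := sliding (g := fun τ q => u (2 * l - q.1) (q.2 + τ) - u q.1 q.2) (K := K)
    (D := {q : ℝ × ℝ | l ≤ q.1}) (T := T) hK ?_ (fun τ hτ q hq => sub_pos.2 (hT τ hτ q hq)) ?_ ?_
  · intro x y hx
    have := main (x, y) hx
    simp only [add_zero] at this
    linarith
  · exact (w.continuous.comp (by fun_prop : Continuous fun z : ℝ × (ℝ × ℝ) =>
      (2 * l - z.2.1, z.2.2 + z.1))).sub
      (w.continuous.comp (by fun_prop : Continuous fun z : ℝ × (ℝ × ℝ) => (z.2.1, z.2.2)))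
  · intro τ hτ hKpos q hq
    refine nonneg_on_closed (c := c) (μ := μ) (m := -2) (D := {q : ℝ × ℝ | l ≤ q.1})
      (f := fun x y => u (2 * l - x) (y + τ) - u x y)
      (isClosed_le continuous_const continuous_fst) (w.continuous_reflect _ _).continuousOn
      (fun x y _ => by linarith [w.neg_one_lt (2 * l - x) (y + τ), w.lt_one x y]) k.mu_pos
      (fun x y hx hneg => ?_) q.1 q.2 hq
    have hlx : l < x := lt_of_le_of_ne hx fun e => by linarith [hside τ hτ x y e.symm]
    refine ⟨(isOpen_lt continuous_const continuous_fst).mem_nhds hlx |> fun hn =>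
      Filter.mem_of_superset hn fun q hq => le_of_lt hq, _, ?_, w.hasL_reflect_sub (2 * l) τ x y⟩
    have hle : u (2 * l - x) y ≤ u (2 * l - x) (y + τ) :=
      (w.strictMono _).monotone (by linarith)
    have hwell : u x y < -1 + δ ∨ 1 - δ < u (2 * l - x) (y + τ) := by
      by_contra hno
      push Not at hno
      rcases le_total y Y with hy | hy
      · have := hKpos (x, y) ⟨hx, hy, hno.1⟩
        simp only at this
        linarith
      · have := h x y hy hlx (by linarith) (by linarith)
        linarith
    have := k.mul_sub_le w (r := u (2 * l - x) (y + τ)) (s := u x y) (by linarith) (by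
      rcases hwell with h1 | h1
      · exact Or.inl ⟨(w.neg_one_lt _ _).le, by linarith⟩
      · exact Or.inr ⟨by linarith, (w.lt_one _ _).le⟩)
    linarith
  · intro τ hτ hDpos q hq h0
    have hside' := hside τ hτ l q.2 rfl
    have hlq : l < q.1 := lt_of_le_of_ne hq.1 fun e => by linarith [hside τ hτ q.1 q.2 e.symm]
    have := w.reflect_lt_right (fun x y hx => sub_nonneg.1 (hDpos (x, y) hx)) le_rfl hlq
      (sub_pos.1 hside')
    exact absurd h0 (sub_pos.2 this).ne'

end Wave

/-! ### Sheared reflections -/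

/-- A perturbation of `(x, y) ↦ u (2 l - x) (y + τ)` which is raised by `d` at height `n` and whose
reflection axis moves by `s / 2` to the right far below that height. -/
noncomputable def shearedReflection (u : ℝ → ℝ → ℝ) (d s k l n τ x y : ℝ) : ℝ :=
  u (2 * l + s * (1 - exp (k * (y - n))) - x) (y + τ) + d * exp (k * (y - n))

namespace Wave

variable {F : ℝ → ℝ} {c : ℝ} {u : ℝ → ℝ → ℝ} {C δ μ : ℝ}

theorem hasL_shear (w : Wave F c u) {S S' : ℝ → ℝ} {S'' : ℝ} (τ x y : ℝ)
    (hS : ∀ t, HasDerivAt S (S' t) t) (hS' : HasDerivAt S' S'' y) :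
    HasL c (fun x y => u (S y - x) (y + τ)) x y
      (deriv F (u (S y - x) (y + τ)) + S' y ^ 2 * pdxx u (S y - x) (y + τ) +
        2 * S' y * pdy (pdx u) (S y - x) (y + τ) + (S'' + c * S' y) * pdx u (S y - x) (y + τ)) := by
  have hA : ∀ t, HasDerivAt (fun t => S t - x) (S' t) t := fun t => (hS t).sub_const x
  have hB : ∀ t, HasDerivAt (fun t => t + τ) 1 t := fun t => (hasDerivAt_id t).add_const τ
  refine ⟨_, _, _, _, Jet.comp_const_sub (g := fun t => u t (y + τ)) (S y)
    (Jet.of_hasDerivAt (fun t => w.hasDerivAt_x t (y + τ)) (w.hasDerivAt_xx _ _)),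
    Jet.of_hasDerivAt (d := fun t => S' t * pdx u (S t - x) (t + τ) + 1 * pdy u (S t - x) (t + τ))
      (fun t => hasDerivAt_comp_curve w.smooth_one (hA t) (hB t))
      ((hS'.mul (hasDerivAt_comp_curve w.smooth_pdx_one (hA y) (hB y))).add
        ((hasDerivAt_comp_curve w.smooth_pdy_one (hA y) (hB y)).const_mul 1)), ?_⟩
  rw [← w.pde (S y - x) (y + τ), pdx_pdy_comm w.smooth_two]
  simp only [pdxx, pdyy, pdx, pdy]
  ring

theorem hasDerivAt_exp_affine (k n t : ℝ) :
    HasDerivAt (fun t => exp (k * (t - n))) (k * exp (k * (t - n))) t :=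
  ((((hasDerivAt_id t).sub_const n).const_mul k).exp).congr_deriv (by simp [mul_comm])

theorem hasL_shearedReflection (w : Wave F c u) {d s k l n τ x y X E : ℝ}
    (hE : E = exp (k * (y - n))) (hX : X = 2 * l + s * (1 - E) - x) :
    HasL c (shearedReflection u d s k l n τ) x y
      (deriv F (u X (y + τ)) + (s * k * E) ^ 2 * pdxx u X (y + τ) -
        2 * (s * k * E) * pdy (pdx u) X (y + τ) - s * (k ^ 2 + c * k) * E * pdx u X (y + τ) +
        d * (k ^ 2 + c * k) * E) := by
  have h1 := w.hasL_shear (S := fun t => 2 * l + s * (1 - exp (k * (t - n))))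
    (S' := fun t => -(s * k) * exp (k * (t - n))) τ x y
    (fun t => (((hasDerivAt_exp_affine k n t).const_sub 1).const_mul s
      |>.const_add (2 * l)).congr_deriv (by ring)) ((hasDerivAt_exp_affine k n y).const_mul _)
  have h2 : HasL c (fun _ y => d * exp (k * (y - n))) x y (d * (k ^ 2 + c * k) * E) :=
    ⟨_, _, _, _, Jet.const _, (Jet.of_hasDerivAt (fun t => hasDerivAt_exp_affine k n t)
      ((hasDerivAt_exp_affine k n y).const_mul k)).const_mul d, by rw [hE]; ring⟩
  have h3 := h1.add h2
  rw [← hE, ← hX] at h3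
  refine Eq.subst (motive := HasL c (shearedReflection u d s k l n τ) x y) ?_ h3
  ring

set_option maxHeartbeats 800000 in
theorem exists_shearedReflection (w : Wave F c u) (v : Convexity F δ μ) :
    ∃ d s k l₀, 0 < d ∧ 0 < s ∧ 0 < k ∧ ∀ l n τ x y, l₀ ≤ l → 0 ≤ τ → y ≤ n →
      2 * l + s * (1 - exp (k * (y - n))) < 2 * x →
      shearedReflection u d s k l n τ x y ≤ u x y →
      ∃ r < deriv F (shearedReflection u d s k l n τ x y),
        HasL c (shearedReflection u d s k l n τ) x y r := by
  obtain ⟨C, bd⟩ := w.exists_bound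
  have hC := bd.pos
  have hδ := v.delta_pos
  have hδ' := v.delta_le
  have hμ := v.mu_pos
  have hc := w.speed
  obtain ⟨κ, hκ, hfar⟩ := w.exists_far_sign hδ
  obtain ⟨k, hk, hkμ⟩ : ∃ k > 0, k ^ 2 + c * k ≤ μ / 4 := by
    refine ⟨min 1 (μ / (4 * (1 + c))), by positivity, ?_⟩
    set k := min 1 (μ / (4 * (1 + c))) with hk
    have hk0 : 0 < k := by positivity
    have h1 : k ≤ 1 := min_le_left _ _
    have h2 : k ≤ μ / (4 * (1 + c)) := min_le_right _ _
    rw [le_div_iff₀ (by positivity)] at h2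
    nlinarith
  set θ := k ^ 2 + c * k with hθ
  have hθ0 : 0 < θ := by positivity
  set M := (C + μ) / (θ * κ) with hM
  have hM0 : 0 < M := by positivity
  have hMκ : M * θ * κ = C + μ := by rw [hM]; field_simp
  set η := μ / (8 * M * θ) with hη
  have hη0 : 0 < η := by positivity
  have hMη : M * θ * η = μ / 8 := by rw [hη]; field_simp
  set ε := μ / (32 * M * k) with hε
  have hε0 : 0 < ε := by positivity
  have hMε : 2 * M * k * ε = μ / 16 := by rw [hε]; field_simp; norm_num
  set d := min δ (μ / (8 * M ^ 2 * k ^ 2 * C)) with hd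
  have hd0 : 0 < d := by positivity
  have hdδ : d ≤ δ := min_le_left _ _
  have hMd : M ^ 2 * k ^ 2 * C * d ≤ μ / 8 := by
    have : d ≤ μ / (8 * M ^ 2 * k ^ 2 * C) := min_le_right _ _
    rw [le_div_iff₀ (by positivity)] at this
    linarith
  obtain ⟨R₁, hR₁⟩ := hfar η hη0
  obtain ⟨R₂, hR₂⟩ := w.exists_far_abs_dxy_le hε0
  set R := max R₁ R₂ with hR
  obtain ⟨ω, hω, hsq⟩ : ∃ ω > 0, ∀ X Y, |X| ≤ R → |Y| ≤ R → -1 + ω ≤ u X Y := by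
    have hcomp : IsCompact (Set.Icc (-R) R ×ˢ Set.Icc (-R) R) := isCompact_Icc.prod isCompact_Icc
    rcases (Set.Icc (-R) R ×ˢ Set.Icc (-R) R).eq_empty_or_nonempty with he | hne
    · refine ⟨1, one_pos, fun X Y hX hY => ?_⟩
      have : (X, Y) ∈ (Set.Icc (-R) R ×ˢ Set.Icc (-R) R) := ⟨abs_le.1 hX, abs_le.1 hY⟩
      rw [he] at this
      exact this.elim
    · obtain ⟨q, -, hmin⟩ := hcomp.exists_isMinOn hne w.continuous.continuousOn
      refine ⟨1 + u q.1 q.2, by linarith [w.neg_one_lt q.1 q.2], fun X Y hX hY => ?_⟩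
      have : u q.1 q.2 ≤ u X Y := hmin (show (X, Y) ∈ _ from ⟨abs_le.1 hX, abs_le.1 hY⟩)
      linarith
  obtain ⟨X₀, hX₀⟩ := w.exists_right_low R hω
  refine ⟨d, M * d, k, (X₀ + R) / 2, hd0, by positivity, hk, fun l n τ x y hl hτ hy hx hle => ?_⟩
  set E := exp (k * (y - n)) with hE
  have hE0 : 0 < E := exp_pos _
  have hE1 : E ≤ 1 := exp_le_one_iff.2 (mul_nonpos_of_nonneg_of_nonpos hk.le (by linarith))
  set X := 2 * l + M * d * (1 - E) - x with hX
  have hval : shearedReflection u d (M * d) k l n τ x y = u X (y + τ) + d * E := rfl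
  refine ⟨_, ?_, w.hasL_shearedReflection hE hX⟩
  rw [hval] at hle ⊢
  have hdE : 0 < d * E := by positivity
  have hMdE : 0 ≤ M * d * (1 - E) := by
    have := sub_nonneg.2 hE1
    positivity
  have hXx : X < x := by linarith
  have hY : u x y ≤ u x (y + τ) := (w.strictMono x).monotone (by linarith)
  have hFar : Far R X (y + τ) := by
    by_contra hn
    simp only [Far, not_or, not_le] at hn
    have h1 := hsq X (y + τ) hn.1.le hn.2.le
    have h2 := hX₀ x (by linarith [(abs_lt.1 hn.1).2])
    have h3 : u x y ≤ u x R := (w.strictMono x).monotone (by linarith [(abs_lt.1 hn.2).2])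
    linarith
  obtain ⟨hux, hux'⟩ := hR₁ X (y + τ) x (hFar.mono (le_max_left _ _)) hXx (by linarith)
  have huxy := (abs_le.1 (hR₂ X (y + τ) (hFar.mono (le_max_right _ _)))).1
  have huxx := (abs_le.1 (bd.dxx X (y + τ))).2
  set U := u X (y + τ) with hU
  have hU1 := w.neg_one_lt X (y + τ)
  have hU2 := w.lt_one X (y + τ)
  have hu2 := w.lt_one x y
  have t1 : (M * d * k * E) ^ 2 * pdxx u X (y + τ) ≤ μ / 8 * (d * E) := by
    have a1 : (M * d * k * E) ^ 2 * pdxx u X (y + τ) ≤ (M * d * k * E) ^ 2 * C := by gcongr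
    have a2 : (M * d * k * E) ^ 2 * C = M ^ 2 * k ^ 2 * C * d * (d * E) * E := by ring
    have a3 : M ^ 2 * k ^ 2 * C * d * (d * E) * E ≤ μ / 8 * (d * E) * 1 := by gcongr
    linarith
  have t2 : -(2 * (M * d * k * E) * pdy (pdx u) X (y + τ)) ≤ μ / 16 * (d * E) := by
    have a1 : 0 ≤ 2 * M * k * (d * E) * (pdy (pdx u) X (y + τ) + ε) :=
      mul_nonneg (by positivity) (by linarith)
    have a2 : 2 * M * k * ε * (d * E) = μ / 16 * (d * E) := by rw [hMε]
    linarith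
  have t3 : d * θ * E ≤ μ / 4 * (d * E) := by
    have : θ * (d * E) ≤ μ / 4 * (d * E) := by gcongr
    linarith
  have hμdE : 0 < μ * (d * E) := by positivity
  suffices t4 : deriv F U - M * d * θ * E * pdx u X (y + τ) ≤
      deriv F (U + d * E) - 7 / 8 * μ * (d * E) by linarith
  by_cases hband : |U| ≤ 1 - δ
  · have a1 : M * d * θ * E * κ ≤ M * d * θ * E * pdx u X (y + τ) := by
      gcongr
      exact hux' hband
    have a2 : M * d * θ * E * κ = (C + μ) * (d * E) := by rw [← hMκ]; ring
    have a3 := bd.abs_F'_sub_le w (r := U) (s := U + d * E) ⟨by linarith, by linarith⟩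
      ⟨by linarith, by linarith⟩
    rw [add_sub_cancel_left, abs_of_pos hdE] at a3
    have a4 := (abs_le.1 a3).1
    linarith
  · have a1 : M * d * θ * E * (-η) ≤ M * d * θ * E * pdx u X (y + τ) := by gcongr
    have a2 : M * d * θ * E * η = μ / 8 * (d * E) := by rw [← hMη]; ring
    have hdE' : d * E ≤ δ := (mul_le_of_le_one_right hd0.le hE1).trans hdδ
    have a3 := v.mul_sub_le w (r := U) (s := U + d * E) (by linarith) (by
      push Not at hband
      rcases lt_abs.1 hband with h | h
      · exact Or.inr ⟨by linarith, by linarith⟩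
      · exact Or.inl ⟨by linarith, by linarith⟩)
    rw [add_sub_cancel_left] at a3
    linarith

theorem continuous_shearedReflection (w : Wave F c u) (d s k l n : ℝ) :
    Continuous fun z : ℝ × (ℝ × ℝ) => shearedReflection u d s k l n z.1 z.2.1 z.2.2 :=
  (w.continuous.comp (by fun_prop : Continuous fun z : ℝ × (ℝ × ℝ) =>
    (2 * l + s * (1 - exp (k * (z.2.2 - n))) - z.2.1, z.2.2 + z.1))).add (by fun_prop)

theorem exists_reflect_le_of_frequently (w : Wave F c u) :
    ∃ d s l₀, 0 < d ∧ ∀ l, l₀ ≤ l → (∃ᶠ n in atTop, ∀ x, l < x → u x n < u (2 * l - x) n + d) →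
      ∀ x y, 2 * l + s < 2 * x → u x y ≤ u (2 * l + s - x) y := by
  obtain ⟨δ, μ, v⟩ := w.exists_convexity
  have hδ := v.delta_pos
  obtain ⟨d, s, k, l₀, hd, hs, hk, hsuper⟩ := w.exists_shearedReflection v
  refine ⟨d, s, l₀, hd, fun l hl hfreq x y hx => ?_⟩
  have key : ∀ n, (∀ x, l < x → u x n < u (2 * l - x) n + d) → ∀ x y, y ≤ n →
      2 * l + s * (1 - exp (k * (y - n))) ≤ 2 * x →
      u x y ≤ shearedReflection u d s k l n 0 x y := by
    intro n hn
    set D := {q : ℝ × ℝ | q.2 ≤ n ∧ 2 * l + s * (1 - exp (k * (q.2 - n))) ≤ 2 * q.1} with hD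
    set K := D ∩ {q : ℝ × ℝ | -1 + δ ≤ u q.1 q.2} with hKdef
    have hexp_cont : Continuous fun q : ℝ × ℝ => 2 * l + s * (1 - exp (k * (q.2 - n))) := by
      fun_prop
    have hDc : IsClosed D := (isClosed_le continuous_snd continuous_const).inter
      (isClosed_le hexp_cont (continuous_const.mul continuous_fst))
    have hE : ∀ y, y ≤ n → 0 ≤ s * (1 - exp (k * (y - n))) := fun y hy =>
      mul_nonneg hs.le (sub_nonneg.2
        (exp_le_one_iff.2 (mul_nonpos_of_nonneg_of_nonpos hk.le (by linarith))))
    have hK : IsCompact K := (w.isCompact_upper hδ l n).of_isClosed_subset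
      (hDc.inter (isClosed_le continuous_const w.continuous))
      fun q hq => ⟨by linarith [hE q.2 hq.1.1, hq.1.2], hq.1.1, hq.2⟩
    have hcont := w.continuous_shearedReflection d s k l n
    have hslice : ∀ τ, Continuous fun q : ℝ × ℝ => shearedReflection u d s k l n τ q.1 q.2 :=
      fun τ => hcont.comp (by fun_prop : Continuous fun q : ℝ × ℝ => (τ, q))
    have hside : ∀ τ > 0, ∀ q ∈ D, shearedReflection u d s k l n τ q.1 q.2 - u q.1 q.2 ≤ 0 →
        D ∈ nhds q ∧ 2 * l + s * (1 - exp (k * (q.2 - n))) < 2 * q.1 := by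
      rintro τ hτ ⟨x, y⟩ ⟨hy, hx⟩ hle
      simp only at hy hx hle ⊢
      have hexp : 0 < d * exp (k * (y - n)) := by positivity
      have hx' : 2 * l + s * (1 - exp (k * (y - n))) < 2 * x := by
        refine lt_of_le_of_ne hx fun e => ?_
        rw [shearedReflection, e, show 2 * x - x = x by ring] at hle
        have : u x y < u x (y + τ) := w.strictMono x (by linarith)
        linarith
      have hy' : y < n := by
        refine lt_of_le_of_ne hy fun e => ?_
        rw [shearedReflection, e, sub_self, mul_zero, exp_zero, sub_self, mul_zero, add_zero,
          mul_one] at hle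
        have h1 := hn x (by linarith [hE y hy])
        have h2 : u (2 * l - x) n < u (2 * l - x) (n + τ) := w.strictMono _ (by linarith)
        linarith
      refine ⟨?_, hx'⟩
      have ho : IsOpen {q : ℝ × ℝ | q.2 < n ∧ 2 * l + s * (1 - exp (k * (q.2 - n))) < 2 * q.1} :=
        (isOpen_lt continuous_snd continuous_const).inter
          (isOpen_lt hexp_cont (continuous_const.mul continuous_fst))
      exact Filter.mem_of_superset (ho.mem_nhds ⟨hy', hx'⟩) fun q hq => ⟨hq.1.le, hq.2.le⟩
    obtain ⟨T, hT⟩ := w.exists_shift_lt hK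
      (X := fun q => 2 * l + s * (1 - exp (k * (q.2 - n))) - q.1) (by fun_prop)
    have main := sliding (g := fun τ q => shearedReflection u d s k l n τ q.1 q.2 - u q.1 q.2)
      (K := K) (D := D) (T := T) hK ?_ (fun τ hτ q hq => ?_) ?_ ?_
    · intro x y hy hx
      exact sub_nonneg.1 (main (x, y) ⟨hy, hx⟩)
    · exact hcont.sub (w.continuous.comp continuous_snd)
    · have h1 := hT τ hτ q hq
      have h2 : 0 < d * exp (k * (q.2 - n)) := by positivity
      simp only [shearedReflection]
      linarith
    · intro τ hτ hKpos q hq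
      refine nonneg_on_closed (c := c) (μ := μ) (m := -2) (D := D)
        (f := fun x y => shearedReflection u d s k l n τ x y - u x y) hDc
        ((hslice τ).sub w.continuous).continuousOn
        (fun x y _ => ?_) v.mu_pos (fun x y hx hneg => ?_) q.1 q.2 hq
      · have h2 : 0 < d * exp (k * (y - n)) := by positivity
        have h3 := w.neg_one_lt (2 * l + s * (1 - exp (k * (y - n))) - x) (y + τ)
        have h4 := w.lt_one x y
        simp only [shearedReflection]
        linarith
      · obtain ⟨h1, h2⟩ := hside τ hτ (x, y) hx hneg.le
        refine ⟨h1, ?_⟩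
        obtain ⟨r, hr, hL⟩ := hsuper l n τ x y hl hτ.le hx.1 h2 (sub_nonpos.1 hneg.le)
        refine ⟨_, ?_, hL.sub (w.hasL_self x y)⟩
        have hlow : u x y < -1 + δ := by
          by_contra hno
          push Not at hno
          exact absurd (hKpos (x, y) ⟨hx, hno⟩) (not_le.2 hneg)
        have h3 : -1 ≤ shearedReflection u d s k l n τ x y := by
          have h2 : 0 < d * exp (k * (y - n)) := by positivity
          have h3 := w.neg_one_lt (2 * l + s * (1 - exp (k * (y - n))) - x) (y + τ)
          simp only [shearedReflection]
          linarith
        have := v.mul_sub_le w (sub_nonpos.1 hneg.le) (Or.inl ⟨h3, by linarith⟩)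
        linarith
    · rintro τ hτ hDpos ⟨x, y⟩ hq h0
      obtain ⟨h1, h2⟩ := hside τ hτ (x, y) hq.1 h0.le
      have h0' : shearedReflection u d s k l n τ x y = u x y := sub_eq_zero.1 h0
      obtain ⟨r, hr, hL⟩ := hsuper l n τ x y hl hτ.le hq.1.1 h2 h0'.le
      have := (hL.sub (w.hasL_self x y)).nonneg (by
        filter_upwards [h1] with p hp
        simp only [h0', sub_self]
        exact hDpos p hp)
      rw [h0'] at hr
      linarith
  have hlim : Tendsto (fun n => shearedReflection u d s k l n 0 x y) atTop
      (nhds (u (2 * l + s - x) y)) := by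
    have e1 : Tendsto (fun n => exp (k * (y - n))) atTop (nhds 0) :=
      tendsto_exp_atBot.comp
        ((tendsto_atBot_add_const_left _ y tendsto_neg_atTop_atBot).congr (fun n => by ring)
          |>.const_mul_atBot hk)
    have e2 := ((((e1.const_sub 1).const_mul s).const_add (2 * l)).sub_const x).prodMk_nhds
      (tendsto_const_nhds (x := y + 0))
    have e3 := ((w.continuous.tendsto _).comp e2).add (e1.const_mul d)
    simp only [mul_zero, add_zero, sub_zero, mul_one] at e3
    simpa only [shearedReflection, add_zero, Function.comp_def] using e3
  refine ge_of_tendsto_of_frequently hlim ?_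
  refine (hfreq.and_eventually (eventually_ge_atTop y)).mono fun n hn => key n hn.1 x y hn.2 ?_
  have : 0 < s * exp (k * (y - n)) := by positivity
  linarith

end Wave

/-! ### Starting the moving planes -/

namespace Wave

variable {F : ℝ → ℝ} {c : ℝ} {u : ℝ → ℝ → ℝ} {δ δ' μ κ B : ℝ}

theorem Convexity.mono (v : Convexity F δ μ) (h : 0 < δ') (h' : δ' ≤ δ) : Convexity F δ' μ :=
  ⟨h, h'.trans v.delta_le, v.mu_pos, fun s hs => v.le s (by linarith)⟩

/-- On a slice at a large height, a pair of points violating the ordering by the reflection in `l`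
excludes a pair violating the reverse ordering by the reflection in `m`, if `m` is to the left of
`l` by a definite amount. -/
theorem Band.not_both (b : Band u δ κ B) (w : Wave F c u) (hδ : δ ≤ 1) {l m y a x x' z : ℝ}
    (hhigh : ∀ x, |x| ≤ B → 1 - δ < u x y) (hlm : 2 < κ * (2 * l - 2 * m))
    (hax : a + x = 2 * l) (hax' : a < x) (hu : u a y < u x y) (hua : u a y ≤ 1 - δ)
    (hux : -1 + δ ≤ u x y) (hxz : x' + z = 2 * m) (hxz' : x' < z) (hu' : u z y < u x' y)
    (huz : u z y ≤ 1 - δ) : u x' y < -1 + δ := by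
  by_contra hux'
  push Not at hux'
  have hκ := b.kappa_pos
  have hB := b.nonneg
  have hrange : ∀ p q, u p y - u q y < 2 := fun p q => by
    linarith [w.lt_one p y, w.neg_one_lt q y]
  have ha : a < -B := by
    by_contra hn
    push Not at hn
    rcases le_total a B with h | h
    · linarith [hhigh a (abs_le.2 ⟨hn, h⟩)]
    · have := b.le_sub w hδ h hax'.le hux hua
      nlinarith
  have hz : B < z := by
    by_contra hn
    push Not at hn
    rcases le_total (-B) z with h | h
    · linarith [hhigh z (abs_le.2 ⟨h, hn⟩)]
    · have := b.le_sub_left w hδ h hxz'.le hux' huz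
      nlinarith
  rcases lt_or_ge z x with h | h
  · have h1 := b.le_sub w hδ hz.le h.le hux huz
    have h2 : a < x' := by
      by_contra hn
      push Not at hn
      have := b.le_sub_left w hδ ha.le hn hux' hua
      nlinarith
    have h3 : κ * (2 * l - 2 * m) ≤ κ * (x - z) :=
      mul_le_mul_of_nonneg_left (by linarith) hκ.le
    linarith [hrange z x]
  · have h2 : κ * (2 * l - 2 * m) ≤ κ * (a - x') :=
      mul_le_mul_of_nonneg_left (by linarith) hκ.le
    have h3 : 0 < a - x' := by
      by_contra hn
      push Not at hn
      have := mul_nonpos_of_nonneg_of_nonpos hκ.le hn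
      linarith
    have h1 := b.le_sub_left w hδ ha.le (by linarith) hux' hua
    linarith [hrange a x']

theorem exists_frequently_reflect_lt (w : Wave F c u) {d : ℝ} (hd : 0 < d) :
    ∃ l₀, ∀ l, l₀ ≤ l → ∃ᶠ n in atTop, ∀ x, l < x → u x n < u (2 * l - x) n + d := by
  by_contra hno
  push Not at hno
  obtain ⟨δ₁, μ, v₁⟩ := w.exists_convexity
  set δ := min δ₁ d with hδ
  have hδ0 : 0 < δ := lt_min v₁.delta_pos hd
  have v : Convexity F δ μ := v₁.mono hδ0 (min_le_left _ _)
  have hδd : δ ≤ d := min_le_right _ _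
  have hδ1 : δ ≤ 1 := by linarith [v.delta_le]
  obtain ⟨κ, B, b⟩ := w.exists_band hδ0
  have hκ := b.kappa_pos
  obtain ⟨Y, hY⟩ := w.exists_high B hδ0
  have hmono : ∀ l x y, l ≤ x → u (-x) y ≤ u (-(2 * l - x)) y := by
    intro l
    obtain ⟨r, hr, hev⟩ := hno (-l + 2 / κ)
    obtain ⟨N, hN⟩ := eventually_atTop.1 hev
    refine w.mirror.reflect_le_of_eventually v (Y := max Y N) fun x y hy hx hlt hle => ?_
    have hn := hN y ((le_max_right _ _).trans hy)
    obtain ⟨p, hp, hpd⟩ := hn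
    have hr' : 2 / κ + 2 / κ ≤ 2 * r - 2 * (-l) := by linarith [hr]
    refine b.not_both w hδ1 (fun x hx => hY x y hx ((le_max_left _ _).trans hy))
      (m := -l) ?_ (a := 2 * r - p) (x := p) (by ring) (by linarith)
      (by linarith) (by linarith [w.lt_one p y]) (by linarith [w.neg_one_lt (2 * r - p) y])
      (z := -(2 * l - x)) (by ring) (by linarith) hlt hle
    have h1 : κ * (2 / κ + 2 / κ) ≤ κ * (2 * r - 2 * -l) := by gcongr
    have h2 : κ * (2 / κ + 2 / κ) = 4 := by field_simp; norm_num
    linarith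
  have hu0 := w.neg_one_lt 0 0
  obtain ⟨X, hX⟩ := w.exists_right_low 0 (δ := 1 + u 0 0) (by linarith)
  have h1 := hX (max X 0) (le_max_left _ _)
  have h2 := hmono (-(max X 0) / 2) 0 0 (by linarith [le_max_right X 0])
  rw [show -(2 * (-max X 0 / 2) - 0) = max X 0 by ring, neg_zero] at h2
  linarith

theorem exists_reflect_le (w : Wave F c u) :
    ∃ l₁, ∀ l, l₁ < l → ∀ x y, l ≤ x → u x y ≤ u (2 * l - x) y := by
  obtain ⟨d, s, l₀, hd, hle⟩ := w.exists_reflect_le_of_frequently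
  obtain ⟨l₂, hl₂⟩ := w.exists_frequently_reflect_lt hd
  refine ⟨max l₀ l₂ + s / 2, fun l hl x y hx => ?_⟩
  rcases hx.eq_or_lt with rfl | hx
  · rw [show 2 * l - l = l by ring]
  · have := hle (l - s / 2) (by linarith [le_max_left l₀ l₂])
      (hl₂ _ (by linarith [le_max_right l₀ l₂])) x y (by linarith)
    rwa [show 2 * (l - s / 2) + s - x = 2 * l - x by ring] at this

theorem eq_reflect_of_not_lt (w : Wave F c u) {l q y : ℝ}
    (h : ∀ x y, l ≤ x → u x y ≤ u (2 * l - x) y) (hq : l < q) (hn : u (2 * l - q) y ≤ u q y)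
    (x : ℝ) : u (2 * l - x) y = u x y := by
  have h' : ∀ x y, l ≤ x → u x y ≤ u (2 * l - x) (y + 0) := by simpa using h
  have key : ∀ x, l ≤ x → u (2 * l - x) y = u x y := by
    intro x hx
    refine le_antisymm ?_ (h x y hx)
    by_contra hlt
    push Not at hlt
    rcases lt_trichotomy x q with hxq | rfl | hxq
    · have := w.reflect_lt_right h' hx hxq (by simpa using hlt)
      rw [add_zero] at this
      linarith
    · linarith
    · have := w.reflect_lt_left h' hq hxq (by simpa using hlt)
      rw [add_zero] at this
      linarith
  rcases le_total l x with hx | hx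
  · exact key x hx
  · have := key (2 * l - x) (by linarith)
    rw [sub_sub_cancel] at this
    exact this.symm

theorem exists_reflect_lt (w : Wave F c u) :
    ∃ l₁, ∀ l, l₁ < l → ∀ x y, l < x → u x y < u (2 * l - x) y := by
  obtain ⟨l₁, h⟩ := w.exists_reflect_le
  refine ⟨l₁, fun l hl x y hx => ?_⟩
  by_contra hn
  push Not at hn
  have hsymm := w.eq_reflect_of_not_lt (h l hl) hx hn
  have hanti : ∀ p q, l₁ < p → p ≤ q → u q y ≤ u p y := by
    intro p q hp hpq
    have := h ((p + q) / 2) (by linarith) q y (by linarith)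
    rwa [show 2 * ((p + q) / 2) - q = p by ring] at this
  set m := (l₁ + l) / 2 with hm
  set p := (l₁ + m) / 2 with hp
  have hsymm' := w.eq_reflect_of_not_lt (h m (by linarith)) (q := 2 * m - p) (y := y)
    (by linarith) (by
    have h1 := hanti (2 * m - p) (2 * l - p) (by linarith) (by linarith)
    rw [hsymm p] at h1
    rwa [sub_sub_cancel])
  have hper : ∀ n : ℕ, u (l + n * (2 * (l - m))) y = u l y := by
    intro n
    induction n with
    | zero => simp
    | succ n ih =>
      rw [← ih, ← hsymm' (l + n * (2 * (l - m))), ← hsymm (2 * m - _)]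
      congr 1
      push_cast
      ring
  have hul := w.neg_one_lt l y
  obtain ⟨X, hX⟩ := w.exists_right_low y (δ := 1 + u l y) (by linarith)
  have hlm : 0 < 2 * (l - m) := by linarith
  obtain ⟨n, hn'⟩ := exists_nat_ge ((X - l) / (2 * (l - m)))
  rw [div_le_iff₀ hlm] at hn'
  have := hX (l + n * (2 * (l - m))) (by linarith)
  rw [hper] at this
  linarith

end Wave

/-- Starting the moving plane: for all sufficiently large `λ`, the reflection
`u(2λ - x, y)` dominates `u(x, y)` on the half-plane `x > λ` (Lemma 2.9). -/
theorem moving_plane_starts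
    (F : ℝ → ℝ) (hF : BalancedDoubleWell F) (c : ℝ) (hc : 0 < c)
    (u : ℝ → ℝ → ℝ) (hu : IsTravelingWave F c u) :
    ∃ lam₁ : ℝ, ∀ lam : ℝ, lam₁ < lam →
      ∀ x y : ℝ, lam < x → u x y < u (2 * lam - x) y :=
  (Wave.mk hF hc hu).exists_reflect_lt
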